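/- Let 𝔾 be a discrete quantum group of Kac type with tracial dual Haar state φ̂, let E be a conditional expectation of B(L²(𝔾)) onto L∞(𝔾̂), and set m := φ̂ ∘ E|_{L∞(𝔾)}. Then for every x ∈ L∞(𝔾) and all â, b̂ ∈ L∞(𝔾̂), taking ω := ω_{Λ_{φ̂}(â), Λ_{φ̂}(b̂)}, one has m((ω⊗id)Δ(x)) = (φ̂⊗φ̂)(Δ̂(b̂*)(E(x)⊗1)Δ̂(â)) = φ̂(E(x)) φ̂(â b̂*) = ω(1) m(x). -/

import Mathlib

/-!
Common framework: an axiomatization of locally compact quantum groups (in the von Neumann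
algebraic setting of Kustermans–Vaes) acting on a Hilbert space `H = L²(𝔾)`.

Since completed Hilbert space tensor products are not available, the tensor square
`H2 = L²(𝔾) ⊗ L²(𝔾)` is axiomatized: a Hilbert space together with a bilinear map
`tmul` with total range satisfying `⟪a ⊗ b, c ⊗ d⟫ = ⟪a, c⟫⟪b, d⟫`, the induced tensor
product of operators `tensorOp`, tensor products `funcTensor` of normal functionals,
and the slice maps `sliceL = ω ⊗ id`, `sliceR = id ⊗ ω`.

Normal functionals (elements of the predual `B(H)_*`) are characterized concretely:
`ω(x) = ∑ ⟪ηₙ, x ξₙ⟫` with `∑‖ξₙ‖² , ∑‖ηₙ‖² < ∞`.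

Membership of an operator `X` on `H2` in a spatial tensor product `P ⊗̄ Q` of von Neumann
algebras is encoded, via the commutation theorem, as: `X` commutes with all `a' ⊗ b'`
with `a' ∈ P'`, `b' ∈ Q'`.

A locally compact quantum group is recorded through its left regular co-representation
`W ∈ L∞(𝔾) ⊗̄ L∞(𝔾̂)` and right regular co-representation `V ∈ L∞(𝔾̂)' ⊗̄ L∞(𝔾)`,
which implement the co-multiplication: `Δ(x) = W*(1 ⊗ x)W = V(x ⊗ 1)V*` for `x ∈ L∞(𝔾)`;
`Δ̄(x) := W*(1 ⊗ x)W` for arbitrary `x ∈ B(H)` is the canonical normal extension of `Δ`.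
-/

noncomputable section

open scoped ComplexOrder ComplexInnerProductSpace

namespace LCQGNote

/-- The bounded operators `B(H)`. -/
abbrev B (H : Type*) [NormedAddCommGroup H] [InnerProductSpace ℂ H] : Type _ := H →L[ℂ] H

variable (H H2 : Type*)
  [NormedAddCommGroup H] [InnerProductSpace ℂ H] [CompleteSpace H]
  [NormedAddCommGroup H2] [InnerProductSpace ℂ H2] [CompleteSpace H2]

/-- The vector functional `ω_{ξ,η} : x ↦ ⟨x ξ, η⟩` on `B(H)` (written here in the
Mathlib convention for inner products, which are conjugate-linear in the first slot). -/
def vecFunctional (ξ η : H) : B H →ₗ[ℂ] ℂ where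
  toFun x := ⟪η, x ξ⟫
  map_add' x y := by simp [inner_add_right]
  map_smul' c x := by simp [inner_smul_right]

/-- A functional on `B(H)` is normal (σ-weakly continuous, i.e. belongs to the predual
`B(H)_*`) iff it has the form `x ↦ ∑ ⟪ηₙ, x ξₙ⟫` with `(ξₙ), (ηₙ)` square-summable. -/
def IsNormalFunctional (ω : B H →ₗ[ℂ] ℂ) : Prop :=
  ∃ ξ η : ℕ → H, Summable (fun n => ‖ξ n‖ ^ 2) ∧ Summable (fun n => ‖η n‖ ^ 2) ∧
    ∀ x : B H, HasSum (fun n => ⟪η n, x (ξ n)⟫) (ω x)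

/-- `φ` is a state of the von Neumann algebra `N ⊆ B(H)`: it is unital and positive on `N`.
(Functionals on `N` are encoded as functionals on `B(H)`; only the restriction to `N`
matters, by the Hahn–Banach extension theorem.) -/
def IsStateOn (N : VonNeumannAlgebra H) (φ : B H →ₗ[ℂ] ℂ) : Prop :=
  φ 1 = 1 ∧ ∀ x : B H, x ∈ N → x.IsPositive → 0 ≤ φ x

/-- A conditional expectation of `B(H)` onto a von Neumann subalgebra `N`:
a unital positive projection `E : B(H) → B(H)` with range `N`. -/
structure IsConditionalExpectation (N : VonNeumannAlgebra H) (E : B H →ₗ[ℂ] B H) : Prop where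
  unital : E 1 = 1
  positive : ∀ x : B H, x.IsPositive → (E x).IsPositive
  mem_range : ∀ x : B H, E x ∈ N
  fixes : ∀ x ∈ N, E x = x

/-- The center of a von Neumann algebra `N`: elements of `N` commuting with all of `N`. -/
def center (N : VonNeumannAlgebra H) : Set (B H) := {z | z ∈ N ∧ ∀ y ∈ N, z * y = y * z}

/-- A von Neumann algebra `N ⊆ B(H)` is injective if there is a conditional expectation
of `B(H)` onto `N`. -/
def IsInjectiveVNA (N : VonNeumannAlgebra H) : Prop :=
  ∃ E : B H →ₗ[ℂ] B H, IsConditionalExpectation H N E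

/-- A locally compact quantum group `𝔾`, axiomatized over its Hilbert space `H = L²(𝔾)`
together with the tensor square `H2 = L²(𝔾) ⊗ L²(𝔾)`.  `M = L∞(𝔾)`, `Mhat = L∞(𝔾̂)`
(both acting canonically on `L²(𝔾)`). -/
structure LCQG where
  /-- `L∞(𝔾)` -/
  M : VonNeumannAlgebra H
  /-- `L∞(𝔾̂)`, the dual von Neumann algebra, also acting on `L²(𝔾)` -/
  Mhat : VonNeumannAlgebra H
  /-- the tensor map `H × H → H2 = H ⊗ H` -/
  tmul : H →ₗ[ℂ] H →ₗ[ℂ] H2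
  tmul_inner : ∀ a b c d : H, ⟪tmul a b, tmul c d⟫ = ⟪a, c⟫ * ⟪b, d⟫
  tmul_total : (Submodule.span ℂ {v : H2 | ∃ a b, v = tmul a b}).topologicalClosure = ⊤
  /-- the tensor product of operators: `tensorOp x y = x ⊗ y` on `H2` -/
  tensorOp : B H →ₗ[ℂ] B H →ₗ[ℂ] B H2
  tensorOp_apply : ∀ (x y : B H) (a b : H), tensorOp x y (tmul a b) = tmul (x a) (y b)
  /-- the flip (tensor swap) unitary `Σ` on `H2` -/
  flipU : B H2
  flipU_apply : ∀ a b : H, flipU (tmul a b) = tmul b a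
  /-- the tensor product `ω ⊗ ρ` of (normal) functionals -/
  funcTensor : (B H →ₗ[ℂ] ℂ) → (B H →ₗ[ℂ] ℂ) → (B H2 →ₗ[ℂ] ℂ)
  funcTensor_elem : ∀ ω ρ (x y : B H), funcTensor ω ρ (tensorOp x y) = ω x * ρ y
  funcTensor_normal : ∀ ω ρ, IsNormalFunctional H ω → IsNormalFunctional H ρ →
    IsNormalFunctional H2 (funcTensor ω ρ)
  /-- the left slice map `sliceL ω = ω ⊗ id : B(H2) → B(H)` -/
  sliceL : (B H →ₗ[ℂ] ℂ) → B H2 →ₗ[ℂ] B H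
  /-- the right slice map `sliceR ω = id ⊗ ω : B(H2) → B(H)` -/
  sliceR : (B H →ₗ[ℂ] ℂ) → B H2 →ₗ[ℂ] B H
  sliceL_char : ∀ ω X (ξ η : H),
    vecFunctional H ξ η (sliceL ω X) = funcTensor ω (vecFunctional H ξ η) X
  sliceR_char : ∀ ω X (ξ η : H),
    vecFunctional H ξ η (sliceR ω X) = funcTensor (vecFunctional H ξ η) ω X
  /-- the left regular co-representation `W` -/
  W : B H2
  W_unitary_l : star W * W = 1
  W_unitary_r : W * star W = 1
  /-- `W ∈ L∞(𝔾) ⊗̄ L∞(𝔾̂)` (via the commutation theorem for tensor products) -/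
  W_mem : ∀ a' ∈ M.commutant, ∀ b' ∈ Mhat.commutant, Commute W (tensorOp a' b')
  /-- the right regular co-representation `V` -/
  V : B H2
  V_unitary_l : star V * V = 1
  V_unitary_r : V * star V = 1
  /-- `V ∈ L∞(𝔾̂)' ⊗̄ L∞(𝔾)` (via the commutation theorem for tensor products) -/
  V_mem : ∀ a ∈ Mhat, ∀ b' ∈ M.commutant, Commute V (tensorOp a b')
  /-- `Δ` maps `L∞(𝔾)` into `L∞(𝔾) ⊗̄ L∞(𝔾)` -/
  Delta_mem : ∀ x ∈ M, ∀ a' ∈ M.commutant, ∀ b' ∈ M.commutant,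
    Commute (star W * tensorOp 1 x * W) (tensorOp a' b')
  /-- `V` also implements the co-multiplication: `Δ(x) = V(x ⊗ 1)V*` on `L∞(𝔾)` -/
  Delta_V : ∀ x ∈ M, star W * tensorOp 1 x * W = V * tensorOp x 1 * star V
  /-- slices of `Δ(x)`, `x ∈ L∞(𝔾)`, lie in `L∞(𝔾)` -/
  slice_Delta_mem : ∀ ω, ∀ x ∈ M, sliceL ω (star W * tensorOp 1 x * W) ∈ M
  /-- slices `(ω ⊗ id)(V (x ⊗ 1) V*)` lie in `L∞(𝔾)`, since `V ∈ L∞(𝔾̂)' ⊗̄ L∞(𝔾)` -/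
  sliceL_rConj_mem : ∀ ω (x : B H), sliceL ω (V * tensorOp x 1 * star V) ∈ M
  /-- the fixed-point characterization `L∞(𝔾̂) = {y : V(y ⊗ 1)V* = y ⊗ 1}`
  (cf. Kustermans–Vaes, proof of Proposition 4.2) -/
  fixedPoint_mem : ∀ y : B H, V * tensorOp y 1 * star V = tensorOp y 1 → y ∈ Mhat

namespace LCQG

variable {H H2} (Q : LCQG H H2)

/-- The (extended) co-multiplication `Δ̄ : B(L²(𝔾)) → L∞(𝔾) ⊗̄ B(L²(𝔾))`,
`Δ̄(x) = W*(1 ⊗ x)W`; its restriction to `L∞(𝔾)` is the co-multiplication `Δ`. -/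
def Delta (x : B H) : B H2 := star Q.W * Q.tensorOp 1 x * Q.W

/-- The map `x ↦ V (x ⊗ 1) V*` on `B(L²(𝔾))`. -/
def rConj : B H →ₗ[ℂ] B H2 where
  toFun x := Q.V * Q.tensorOp x 1 * star Q.V
  map_add' x y := by simp [mul_add, add_mul]
  map_smul' c x := by simp [mul_smul_comm, smul_mul_assoc]

/-- The left regular co-representation of the dual: `Ŵ = Σ W* Σ` (i.e. `σ(W)*`). -/
def What : B H2 := Q.flipU * star Q.W * Q.flipU

/-- The (extended) co-multiplication of the dual quantum group, `Δ̂(y) = Ŵ*(1 ⊗ y)Ŵ`. -/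
def Deltahat (y : B H) : B H2 := star Q.What * Q.tensorOp 1 y * Q.What

/-- `m` is a left-invariant mean on `L∞(𝔾)`: a state with
`m((ω ⊗ id)Δ(x)) = ω(1) m(x)` for all `x ∈ L∞(𝔾)` and normal `ω ∈ L¹(𝔾)`. -/
def IsLeftInvariantMean (m : B H →ₗ[ℂ] ℂ) : Prop :=
  IsStateOn H Q.M m ∧
    ∀ x ∈ Q.M, ∀ ω : B H →ₗ[ℂ] ℂ, IsNormalFunctional H ω →
      m (Q.sliceL ω (Q.Delta x)) = ω 1 * m x

/-- `𝔾` is amenable if it admits a left-invariant mean. -/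
def Amenable : Prop := ∃ m : B H →ₗ[ℂ] ℂ, Q.IsLeftInvariantMean m

/-- `𝔾` is quantum injective if there is a conditional expectation of `B(L²(𝔾))` onto
`L∞(𝔾)` mapping `L∞(𝔾̂)` into the center of `L∞(𝔾)`. -/
def QuantumInjective : Prop :=
  ∃ E : B H →ₗ[ℂ] B H, IsConditionalExpectation H Q.M E ∧
    ∀ x ∈ Q.Mhat, E x ∈ center H Q.M

end LCQG

/-- A discrete quantum group `𝔾` of Kac type: a locally compact quantum group whose dual
`𝔾̂` is compact — i.e. it possesses a (bi-invariant, normal) Haar state `φ̂` on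
`L∞(𝔾̂)` — such that `φ̂` is moreover a trace (Kac type).  The GNS construction of
`(L∞(𝔾̂), φ̂)` is canonically realized on `L²(𝔾)`, with GNS map `Λ = Λ_{φ̂}`. -/
structure DiscreteKacQG extends LCQG H H2 where
  /-- the Haar state `φ̂` of the compact dual `𝔾̂` -/
  phihat : B H →ₗ[ℂ] ℂ
  phihat_state : IsStateOn H toLCQG.Mhat phihat
  phihat_normal : IsNormalFunctional H phihat
  /-- Kac type: the dual Haar state is a trace -/
  phihat_tracial : ∀ a ∈ toLCQG.Mhat, ∀ b ∈ toLCQG.Mhat, phihat (a * b) = phihat (b * a)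
  /-- slices of `Δ̂(y)`, `y ∈ L∞(𝔾̂)`, lie in `L∞(𝔾̂)` -/
  slice_Deltahat_memL : ∀ ω, ∀ y ∈ toLCQG.Mhat, toLCQG.sliceL ω (toLCQG.Deltahat y) ∈ toLCQG.Mhat
  slice_Deltahat_memR : ∀ ω, ∀ y ∈ toLCQG.Mhat, toLCQG.sliceR ω (toLCQG.Deltahat y) ∈ toLCQG.Mhat
  /-- left invariance of `φ̂`: `φ̂((ω ⊗ id)Δ̂(y)) = ω(1) φ̂(y)` -/
  phihat_left_inv : ∀ y ∈ toLCQG.Mhat, ∀ ω : B H →ₗ[ℂ] ℂ, IsNormalFunctional H ω →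
    phihat (toLCQG.sliceL ω (toLCQG.Deltahat y)) = ω 1 * phihat y
  /-- right invariance of `φ̂`: `φ̂((id ⊗ ω)Δ̂(y)) = ω(1) φ̂(y)` -/
  phihat_right_inv : ∀ y ∈ toLCQG.Mhat, ∀ ω : B H →ₗ[ℂ] ℂ, IsNormalFunctional H ω →
    phihat (toLCQG.sliceR ω (toLCQG.Deltahat y)) = ω 1 * phihat y
  /-- the GNS map `Λ_{φ̂} : L∞(𝔾̂) → L²(𝔾)` -/
  Lam : B H → H
  Lam_inner : ∀ a ∈ toLCQG.Mhat, ∀ b ∈ toLCQG.Mhat, ⟪Lam a, Lam b⟫ = phihat (star a * b)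
  Lam_act : ∀ a ∈ toLCQG.Mhat, ∀ b ∈ toLCQG.Mhat, a (Lam b) = Lam (a * b)

/-!
Write `ξ = Λ_{φ̂}(1)` and `c ⊗ ξ` for vectors of the tensor square. Everything rests on the identity
`⟪W(c ⊗ ξ), (1 ⊗ y)W(c ⊗ ξ)⟫ = ‖c‖² φ̂(y)` for `y ∈ L∞(𝔾̂)`.

The axioms do not include the pentagon equation, but it is not needed: invariance of `φ̂` evaluates
`W₂₃ W₁₂ W₂₃*`, whose first-leg blocks are `W(wₖ ⊗ 1)W*` with slices `wₖ` of `W`, in the state of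
`ξ ⊗ ξ`, and `W₁₂* W₂₃ W₁₂ W₂₃*` commutes with the operators on the second leg. Together these give
`⟪W*(c ⊗ ξ), (1 ⊗ y)W*(d ⊗ ξ)⟫ = ⟪c, d⟫ φ̂(y)`, so `d ⊗ aξ ↦ (1 ⊗ a)W*(d ⊗ ξ)` is isometric. By
traciality its adjoint sends `c ⊗ yξ` to `(1 ⊗ y)W(c ⊗ ξ)`. Contractivity of the adjoint gives the
inequality `≤` in the identity above for positive `y`; equality at `y = 1` forces it everywhere.

The conditional expectation need not be normal, so `φ̂ ∘ E` cannot be applied term by term to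
`(ω_{c,c} ⊗ id)Δ(x) = ∑ₖ wₖ* x wₖ`, where `wₖ = (ω_{c,eₖ} ⊗ id)(W) ∈ L∞(𝔾̂)`. Since `φ̂` is tracial,
`φ̂(E(wₖ* x wₖ)) = ⟪wₖ ξ, E(x) wₖ ξ⟫`, and these terms sum to `‖c‖² φ̂(E(x))` by the identity. At
`x = 1` this exhausts `φ̂(E(∑ₖ wₖ* wₖ))`, so by Cauchy–Schwarz the remainders vanish at every `x`.
-/

section

variable {H H2}

open ContinuousLinearMap Filter
open scoped Topology

section HilbertSpace

variable {K : Type*} [NormedAddCommGroup K] [InnerProductSpace ℂ K]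

theorem inner_self_eq_ofReal_norm_sq (v : K) : ⟪v, v⟫ = ((‖v‖ ^ 2 : ℝ) : ℂ) := by
  rw [inner_self_eq_norm_sq_to_K]
  norm_cast

theorem ext_inner_apply {X Y : B K} (h : ∀ p q, ⟪p, X q⟫ = ⟪p, Y q⟫) : X = Y :=
  ContinuousLinearMap.ext fun q => ext_inner_left ℂ fun p => h p q

theorem inner_star_apply [CompleteSpace K] (X : B K) (v w : K) : ⟪v, star X w⟫ = ⟪X v, w⟫ := by
  rw [star_eq_adjoint, adjoint_inner_right]

theorem star_apply_inner [CompleteSpace K] (X : B K) (v w : K) : ⟪star X v, w⟫ = ⟪v, X w⟫ := by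
  rw [star_eq_adjoint, adjoint_inner_left]

theorem inner_apply_apply [CompleteSpace K] (X Y : B K) (v w : K) :
    ⟪X v, Y w⟫ = ⟪v, (star X * Y) w⟫ := by
  rw [mul_apply_eq_comp, inner_star_apply]

theorem isPositive_of_inner_nonneg {T : B K} (h : ∀ v, 0 ≤ ⟪v, T v⟫) : T.IsPositive := by
  refine T.isPositive_iff_complex.2 fun v => ?_
  have hv : 0 ≤ ⟪T v, v⟫ := by
    rw [← inner_conj_symm]
    exact star_nonneg_iff.2 (h v)
  exact ⟨(Complex.eq_re_of_ofReal_le hv).symm, (Complex.nonneg_iff.1 hv).1⟩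

theorem sesquilin_ext_self {V : Type*} [AddCommGroup V] [Module ℂ V]
    {S T : V →ₗ⋆[ℂ] V →ₗ[ℂ] ℂ} (h : ∀ v, S v v = T v v) : S = T := by
  ext d c
  have hadd := h (d + c)
  have hI := h (Complex.I • d + c)
  simp only [map_add, map_smulₛₗ, LinearMap.add_apply, LinearMap.smul_apply, h, smul_eq_mul,
    Complex.conj_I, RingHom.id_apply] at hadd hI
  linear_combination (1 / 2 : ℂ) * hadd + (1 / 2 : ℂ) * Complex.I * hI +
    (1 / 2 : ℂ) * (S d c + T c d - T d c - S c d) * Complex.I_mul_I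

variable {ι : Type*}

theorem sum_norm_sq_le_of_inner_eq {T : ι → K} (hT : Pairwise fun k l => ⟪T k, T l⟫ = 0) {v : K}
    (hv : ∀ k, ⟪T k, v⟫ = ⟪T k, T k⟫) (S : Finset ι) : ∑ k ∈ S, ‖T k‖ ^ 2 ≤ ‖v‖ ^ 2 := by
  have hterm : ∀ k ∈ S, ⟪T k, ∑ l ∈ S, T l⟫ = ⟪T k, T k⟫ := fun k hk => by
    rw [inner_sum, Finset.sum_eq_single_of_mem k hk fun l _ hl => hT hl.symm]
  have hproj : ⟪∑ k ∈ S, T k, v - ∑ k ∈ S, T k⟫ = 0 := by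
    rw [sum_inner]
    exact Finset.sum_eq_zero fun k hk => by rw [inner_sub_right, hv, hterm k hk, sub_self]
  have hsum : ‖∑ k ∈ S, T k‖ ^ 2 = ∑ k ∈ S, ‖T k‖ ^ 2 := by
    have h : ⟪∑ k ∈ S, T k, ∑ k ∈ S, T k⟫ = ∑ k ∈ S, ⟪T k, T k⟫ := by
      rw [sum_inner]
      exact Finset.sum_congr rfl hterm
    simp only [inner_self_eq_ofReal_norm_sq] at h
    exact_mod_cast h
  have hpyth := norm_add_sq_eq_norm_sq_add_norm_sq_of_inner_eq_zero _ _ hproj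
  rw [add_sub_cancel] at hpyth
  nlinarith [sq_nonneg ‖v - ∑ k ∈ S, T k‖]

theorem eq_of_inner_basis_eq (b : HilbertBasis ι ℂ K) {v w : K} (h : ∀ i, ⟪b i, v⟫ = ⟪b i, w⟫) :
    v = w :=
  b.repr.injective <| lp.ext <| funext fun i => by
    rw [b.repr_apply_apply, b.repr_apply_apply, h]

/-- The orthogonal projection onto the span of finitely many vectors of a Hilbert basis. -/
def basisProj (b : HilbertBasis ι ℂ K) (S : Finset ι) : B K :=
  ∑ i ∈ S, InnerProductSpace.rankOne ℂ (b i) (b i)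

theorem basisProj_apply (b : HilbertBasis ι ℂ K) (S : Finset ι) (v : K) :
    basisProj b S v = ∑ i ∈ S, ⟪b i, v⟫ • b i := by
  simp [basisProj, sum_apply]

theorem tendsto_basisProj_apply (b : HilbertBasis ι ℂ K) (v : K) :
    Tendsto (fun S => basisProj b S v) atTop (𝓝 v) := by
  simpa [HasSum, basisProj_apply, b.repr_apply_apply] using b.hasSum_repr v

theorem inner_basisProj_left (b : HilbertBasis ι ℂ K) (S : Finset ι) (v w : K) :
    ⟪basisProj b S v, w⟫ = ⟪v, basisProj b S w⟫ := by
  simp only [basisProj_apply, sum_inner, inner_sum, inner_smul_left, inner_smul_right,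
    inner_conj_symm]
  exact Finset.sum_congr rfl fun i _ => mul_comm _ _

theorem basisProj_mul_self (b : HilbertBasis ι ℂ K) (S : Finset ι) :
    basisProj b S * basisProj b S = basisProj b S := by
  classical
  ext v
  simp +contextual [basisProj_apply, orthonormal_iff_ite.1 b.orthonormal]

theorem norm_basisProj_apply_le (b : HilbertBasis ι ℂ K) (S : Finset ι) (v : K) :
    ‖basisProj b S v‖ ≤ ‖v‖ := by
  have h : ‖basisProj b S v‖ ^ 2 ≤ ‖v‖ * ‖basisProj b S v‖ := by
    calc ‖basisProj b S v‖ ^ 2 = ‖⟪v, basisProj b S v⟫‖ := by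
          conv_rhs => rw [← basisProj_mul_self, mul_apply_eq_comp, ← inner_basisProj_left,
            inner_self_eq_ofReal_norm_sq, Complex.norm_of_nonneg (by positivity)]
      _ ≤ _ := norm_inner_le_norm _ _
  rcases (norm_nonneg (basisProj b S v)).eq_or_lt with h0 | h0
  · rw [← h0]
    exact norm_nonneg v
  · exact le_of_mul_le_mul_right (by rwa [← sq]) h0

end HilbertSpace

section NormalFunctionals

variable {K : Type*} [NormedAddCommGroup K] [InnerProductSpace ℂ K]

theorem norm_inner_apply_le (X : B K) (v w : K) :
    ‖⟪w, X v⟫‖ ≤ ‖X‖ * (‖w‖ ^ 2 + ‖v‖ ^ 2) :=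
  calc ‖⟪w, X v⟫‖ ≤ ‖w‖ * (‖X‖ * ‖v‖) :=
        (norm_inner_le_norm _ _).trans (by gcongr; exact X.le_opNorm v)
    _ = ‖X‖ * (‖w‖ * ‖v‖) := by ring
    _ ≤ _ := by gcongr; nlinarith [sq_nonneg (‖w‖ - ‖v‖), sq_nonneg ‖w‖, sq_nonneg ‖v‖]

/-- The functional `X ↦ ∑ ⟪ηₙ, X ξₙ⟫` given by square-summable families, indexed by any type. -/
def sumFunctional {κ : Type*} (ξ η : κ → K) (hξ : Summable fun n => ‖ξ n‖ ^ 2)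
    (hη : Summable fun n => ‖η n‖ ^ 2) : B K →ₗ[ℂ] ℂ :=
  have hs (X : B K) : Summable fun n => ⟪η n, X (ξ n)⟫ :=
    .of_norm_bounded ((hη.add hξ).mul_left ‖X‖) fun n => norm_inner_apply_le X (ξ n) (η n)
  { toFun := fun X => ∑' n, ⟪η n, X (ξ n)⟫
    map_add' := fun X Y => by simp only [add_apply, inner_add_right, (hs X).tsum_add (hs Y)]
    map_smul' := fun c X => by
      simp only [smul_apply, inner_smul_right, tsum_mul_left, smul_eq_mul, RingHom.id_apply] }

theorem hasSum_sumFunctional {κ : Type*} (ξ η : κ → K) (hξ : Summable fun n => ‖ξ n‖ ^ 2)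
    (hη : Summable fun n => ‖η n‖ ^ 2) (X : B K) :
    HasSum (fun n => ⟪η n, X (ξ n)⟫) (sumFunctional ξ η hξ hη X) :=
  (Summable.of_norm_bounded ((hη.add hξ).mul_left ‖X‖)
    fun n => norm_inner_apply_le X (ξ n) (η n)).hasSum

theorem isNormalFunctional_sumFunctional {κ : Type*} [Denumerable κ] (ξ η : κ → K)
    (hξ : Summable fun n => ‖ξ n‖ ^ 2) (hη : Summable fun n => ‖η n‖ ^ 2) :
    IsNormalFunctional K (sumFunctional ξ η hξ hη) := by
  refine ⟨fun n => ξ ((Denumerable.eqv κ).symm n), fun n => η ((Denumerable.eqv κ).symm n),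
    ?_, ?_, fun X => ?_⟩
  · exact (Equiv.summable_iff (Denumerable.eqv κ).symm (f := fun n => ‖ξ n‖ ^ 2)).2 hξ
  · exact (Equiv.summable_iff (Denumerable.eqv κ).symm (f := fun n => ‖η n‖ ^ 2)).2 hη
  · exact (Equiv.hasSum_iff (Denumerable.eqv κ).symm (f := fun n => ⟪η n, X (ξ n)⟫)).2
      (hasSum_sumFunctional ξ η hξ hη X)

theorem isNormalFunctional_vecFunctional (ξ η : K) :
    IsNormalFunctional K (vecFunctional K ξ η) := by
  have hsum (v : K) : Summable fun n : ℕ => ‖if n = 0 then v else 0‖ ^ 2 :=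
    summable_of_ne_finset_zero (s := {0}) fun n hn => by simp_all
  refine ⟨fun n => if n = 0 then ξ else 0, fun n => if n = 0 then η else 0, hsum ξ, hsum η,
    fun x => ?_⟩
  have hterm : (fun n : ℕ => ⟪if n = 0 then η else 0, x (if n = 0 then ξ else 0)⟫) =
      fun n => if n = 0 then ⟪η, x ξ⟫ else 0 := by
    ext n
    by_cases hn : n = 0 <;> simp [hn]
  rw [hterm]
  exact hasSum_ite_eq 0 _

theorem IsNormalFunctional.tendsto_basisProj {F : B K →ₗ[ℂ] ℂ}
    (hF : IsNormalFunctional K F) {ι : Type*} (b : HilbertBasis ι ℂ K) (X : B K) :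
    Tendsto (fun S => F (basisProj b S * X * basisProj b S)) atTop (𝓝 (F X)) := by
  obtain ⟨ξ, η, hξ, hη, h⟩ := hF
  have hinner S n : ⟪η n, (basisProj b S * X * basisProj b S) (ξ n)⟫ =
      ⟪basisProj b S (η n), X (basisProj b S (ξ n))⟫ := by
    rw [inner_basisProj_left]
    rfl
  simp only [← fun Y => (h Y).tsum_eq, hinner]
  refine tendsto_tsum_of_dominated_convergence ((hη.add hξ).mul_left ‖X‖)
    (fun n => (tendsto_basisProj_apply b _).inner
      ((X.continuous.tendsto _).comp (tendsto_basisProj_apply b _)))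
    (.of_forall fun S n => (norm_inner_apply_le X _ _).trans ?_)
  gcongr <;> exact norm_basisProj_apply_le b S _

theorem basisProj_mul_mul_basisProj {ι : Type*} (b : HilbertBasis ι ℂ K) (S : Finset ι)
    (X : B K) : basisProj b S * X * basisProj b S =
      ∑ p ∈ S, ∑ q ∈ S, ⟪b p, X (b q)⟫ • InnerProductSpace.rankOne ℂ (b p) (b q) := by
  ext v
  simp only [mul_apply_eq_comp, basisProj_apply, map_sum, map_smul, sum_apply, smul_apply,
    InnerProductSpace.rankOne_apply, Finset.smul_sum, smul_smul]
  rw [Finset.sum_comm]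
  simp only [mul_comm]

end NormalFunctionals

section VectorStates

variable {K : Type*} [NormedAddCommGroup K] [InnerProductSpace ℂ K] [CompleteSpace K]

/-- The closed subspace generated by the orbit of the vector `v` under the algebra `A`. -/
def cyclicSubspace (A : StarSubalgebra ℂ (B K)) (v : K) : Submodule ℂ K :=
  (A.toSubalgebra.toSubmodule.map (apply ℂ K v).toLinearMap).topologicalClosure

theorem isClosed_cyclicSubspace (A : StarSubalgebra ℂ (B K)) (v : K) :
    IsClosed (cyclicSubspace A v : Set K) :=
  Submodule.isClosed_topologicalClosure _

theorem apply_mem_cyclicSubspace {A : StarSubalgebra ℂ (B K)} {a : B K} (ha : a ∈ A) (v : K) :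
    a v ∈ cyclicSubspace A v :=
  Submodule.le_topologicalClosure _ ⟨a, ha, rfl⟩

theorem map_mem_of_mem_cyclicSubspace {F : Type*} [NormedAddCommGroup F] [NormedSpace ℂ F]
    {A : StarSubalgebra ℂ (B K)} {u v : K} (hu : u ∈ cyclicSubspace A v) {S : Submodule ℂ F}
    (hS : IsClosed (S : Set F)) (X : K →L[ℂ] F) (h : ∀ a ∈ A, X (a v) ∈ S) : X u ∈ S := by
  have hle : cyclicSubspace A v ≤ S.comap X.toLinearMap := by
    refine Submodule.topologicalClosure_minimal _ ?_ (hS.preimage X.continuous)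
    rintro _ ⟨a, ha, rfl⟩
    exact h a ha
  exact hle hu

theorem exists_tendsto_of_mem_cyclicSubspace {A : StarSubalgebra ℂ (B K)} {u v : K}
    (hu : u ∈ cyclicSubspace A v) :
    ∃ t : ℕ → B K, (∀ n, t n ∈ A) ∧ Tendsto (fun n => t n v) atTop (𝓝 u) := by
  obtain ⟨x, hx, hlim⟩ := mem_closure_iff_seq_limit.1 hu
  choose t ht htx using hx
  exact ⟨t, ht, hlim.congr fun n => (htx n).symm⟩

theorem exists_commutant_projection_cyclicSubspace (N : VonNeumannAlgebra K) (v : K) :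
    ∃ e ∈ N.commutant, e v = v ∧ ∀ u, e u ∈ cyclicSubspace N.toStarSubalgebra v := by
  have : CompleteSpace (cyclicSubspace N.toStarSubalgebra v) :=
    (isClosed_cyclicSubspace _ _).completeSpace_coe
  refine ⟨(cyclicSubspace N.toStarSubalgebra v).starProjection, ?_, ?_,
    fun u => Submodule.starProjection_apply_mem _ u⟩
  · rw [VonNeumannAlgebra.IsStarProjection.mem_iff isStarProjection_starProjection]
    intro y hy
    rw [VonNeumannAlgebra.commutant_commutant] at hy
    rw [Submodule.range_starProjection, Module.End.mem_invtSubmodule]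
    exact fun u hu => map_mem_of_mem_cyclicSubspace hu (isClosed_cyclicSubspace _ _) y
      fun a ha => apply_mem_cyclicSubspace (mul_mem hy ha : y * a ∈ N) v
  · exact Submodule.starProjection_eq_self_iff.2 (apply_mem_cyclicSubspace (one_mem _) v)

/-- The centralizer in `A` of the vector state `Y ↦ ⟪v, Y v⟫`. -/
def stateCentralizer (A : StarSubalgebra ℂ (B K)) (v : K) : StarSubalgebra ℂ (B K) where
  carrier := {t | t ∈ A ∧ ∀ Y ∈ A, ⟪v, (t * Y) v⟫ = ⟪v, (Y * t) v⟫}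
  mul_mem' {s t} hs ht := ⟨mul_mem hs.1 ht.1, fun Y hY => by
    rw [mul_assoc, hs.2 _ (mul_mem ht.1 hY), mul_assoc, ht.2 _ (mul_mem hY hs.1), mul_assoc]⟩
  add_mem' {s t} hs ht := ⟨add_mem hs.1 ht.1, fun Y hY => by
    simp only [add_mul, mul_add, add_apply, inner_add_right, hs.2 Y hY, ht.2 Y hY]⟩
  algebraMap_mem' c := ⟨algebraMap_mem A c, fun Y _ => by rw [Algebra.commutes]⟩
  star_mem' {t} ht := ⟨star_mem ht.1, fun Y hY => by
    have h := congrArg (starRingEnd ℂ) (ht.2 (star Y) (star_mem hY))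
    rw [inner_conj_symm, inner_conj_symm, ← inner_star_apply, ← inner_star_apply] at h
    simpa using h.symm⟩

theorem norm_star_apply_sub_sq {A : StarSubalgebra ℂ (B K)} {v : K} {t Y : B K}
    (ht : t ∈ stateCentralizer A v) (hY : Y ∈ A) :
    ‖star t v - star Y v‖ ^ 2 = ‖t v - Y v‖ ^ 2 + (‖star Y v‖ ^ 2 - ‖Y v‖ ^ 2) := by
  have hself : ‖star t v‖ ^ 2 = ‖t v‖ ^ 2 := by
    have h := ht.2 (star t) (star_mem ht.1)
    rw [mul_apply_eq_comp, mul_apply_eq_comp, inner_star_apply, ← star_apply_inner,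
      inner_self_eq_ofReal_norm_sq, inner_self_eq_ofReal_norm_sq] at h
    exact_mod_cast h
  have hcross : ⟪star t v, star Y v⟫ = ⟪Y v, t v⟫ := by
    have h := ht.2 (star Y) (star_mem hY)
    rwa [mul_apply_eq_comp, mul_apply_eq_comp, inner_star_apply, ← star_apply_inner] at h
  rw [@norm_sub_sq ℂ, @norm_sub_sq ℂ, hself, hcross, inner_re_symm]
  ring

-- The norm of `Y v` and of `star Y v` are compared through approximations `t n v → Y v`; once they
-- agree, also `star (t n) v → star Y v`, and the trace identity passes to the limit.
theorem mem_stateCentralizer_of_cyclic {A : StarSubalgebra ℂ (B K)} {v : K}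
    (hcyc : ∀ Y ∈ A, Y v ∈ cyclicSubspace (stateCentralizer A v) v) {Y : B K} (hY : Y ∈ A) :
    Y ∈ stateCentralizer A v := by
  have hlim {Z : B K} {t : ℕ → B K} (hZ : Z ∈ A) (ht : ∀ n, t n ∈ stateCentralizer A v)
      (h : Tendsto (fun n => t n v) atTop (𝓝 (Z v))) :
      Tendsto (fun n => ‖star (t n) v - star Z v‖ ^ 2) atTop
        (𝓝 (‖star Z v‖ ^ 2 - ‖Z v‖ ^ 2)) := by
    simp only [fun n => norm_star_apply_sub_sq (ht n) hZ]
    simpa using ((tendsto_iff_norm_sub_tendsto_zero.1 h).pow 2).add_const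
      (‖star Z v‖ ^ 2 - ‖Z v‖ ^ 2)
  have hle {Z : B K} (hZ : Z ∈ A) : ‖Z v‖ ^ 2 ≤ ‖star Z v‖ ^ 2 := by
    obtain ⟨t, ht, htend⟩ := exists_tendsto_of_mem_cyclicSubspace (hcyc Z hZ)
    exact sub_nonneg.1 (ge_of_tendsto' (hlim hZ ht htend) fun n => by positivity)
  have heq : ‖star Y v‖ ^ 2 - ‖Y v‖ ^ 2 = 0 :=
    sub_eq_zero.2 ((star_star Y ▸ hle (star_mem hY)).antisymm (hle hY))
  obtain ⟨t, ht, htend⟩ := exists_tendsto_of_mem_cyclicSubspace (hcyc Y hY)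
  have hstar : Tendsto (fun n => star (t n) v) atTop (𝓝 (star Y v)) :=
    tendsto_iff_norm_sub_tendsto_zero.2 <| by
      simpa [heq] using (hlim hY ht htend).sqrt
  refine ⟨hY, fun X hX => ?_⟩
  rw [mul_apply_eq_comp, mul_apply_eq_comp, ← star_apply_inner]
  refine tendsto_nhds_unique (hstar.inner tendsto_const_nhds) ?_
  convert tendsto_const_nhds.inner ((X.continuous.tendsto _).comp htend) using 2 with n
  have h := (ht n).2 X hX
  rwa [mul_apply_eq_comp, mul_apply_eq_comp, ← star_apply_inner] at h

end VectorStates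

section PositiveFunctionals

variable {A : Type*} [Ring A] [StarRing A] [Algebra ℂ A] [StarModule ℂ A] {f : A →ₗ[ℂ] ℂ}

theorem map_star_of_nonneg (hf : ∀ a, 0 ≤ f (star a * a)) (a : A) :
    f (star a) = starRingEnd ℂ (f a) := by
  have him b : (f (star b * b)).im = 0 := (Complex.nonneg_iff.1 (hf b)).2.symm
  have h₁ := him (a + 1)
  have h₂ := him (a + Complex.I • 1)
  have h₃ := him a
  have h₄ := him 1
  simp only [star_add, star_one, star_smul, RCLike.star_def, Complex.conj_I, mul_add, add_mul,
    one_mul, mul_one, neg_smul, neg_mul, smul_mul_assoc, mul_smul_comm, smul_add, smul_neg,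
    smul_smul, Complex.I_mul_I, one_smul, neg_neg, map_add, map_neg, map_smul, smul_eq_mul,
    Complex.add_im, Complex.neg_im, Complex.mul_im, Complex.I_re, Complex.I_im, zero_mul,
    zero_add] at h₁ h₂ h₃ h₄
  apply Complex.ext
  · rw [Complex.conj_re]
    linarith
  · rw [Complex.conj_im]
    linarith

theorem norm_map_star_mul_sq_le (hf : ∀ a, 0 ≤ f (star a * a)) (a b : A) :
    ‖f (star a * b)‖ ^ 2 ≤ (f (star a * a)).re * (f (star b * b)).re := by
  let core : PreInnerProductSpace.Core ℂ A :=
    { inner := fun a b => f (star a * b)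
      conj_inner_symm := fun a b => by rw [← map_star_of_nonneg hf, star_mul, star_star]
      re_inner_nonneg := fun a => (Complex.nonneg_iff.1 (hf a)).1
      add_left := fun a b c => by rw [star_add, add_mul, map_add]
      smul_left := fun a b r => by simp }
  have h := @InnerProductSpace.Core.inner_mul_inner_self_le ℂ A _ _ _ core a b
  rwa [@InnerProductSpace.Core.norm_inner_symm ℂ A _ _ _ core b a, ← sq] at h

theorem hasSum_of_hasSum_one {ι : Type*} {g : ι → A →ₗ[ℂ] ℂ}
    (hg : ∀ k a, 0 ≤ g k (star a * a))
    (hgf : ∀ (S : Finset ι) a, ∑ k ∈ S, g k (star a * a) ≤ f (star a * a))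
    (h_one : HasSum (fun k => g k 1) (f 1)) (x : A) : HasSum (fun k => g k x) (f x) := by
  have hbound (S : Finset ι) : ‖∑ k ∈ S, g k x - f x‖ ≤
      √((f 1 - ∑ k ∈ S, g k 1).re * (f (star x * x)).re) := by
    have hcs := norm_map_star_mul_sq_le (f := f - ∑ k ∈ S, g k)
      (fun a => by simpa using hgf S a) 1 x
    simp only [star_one, one_mul, LinearMap.sub_apply, LinearMap.sum_apply] at hcs
    rw [norm_sub_rev]
    refine Real.le_sqrt_of_sq_le (hcs.trans ?_)
    have hsum : 0 ≤ ∑ k ∈ S, g k (star x * x) := Finset.sum_nonneg fun k _ => hg k x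
    have hone : 0 ≤ f 1 - ∑ k ∈ S, g k 1 := by simpa using hgf S 1
    rw [Complex.sub_re (f (star x * x))]
    exact mul_le_mul_of_nonneg_left (sub_le_self _ (Complex.nonneg_iff.1 hsum).1)
      (Complex.nonneg_iff.1 hone).1
  refine tendsto_iff_norm_sub_tendsto_zero.2 (squeeze_zero (fun _ => norm_nonneg _) hbound ?_)
  have hlim := ((Complex.continuous_re.tendsto _).comp
    (h_one.const_sub (f 1))).mul_const (f (star x * x)).re
  simpa using hlim.sqrt

end PositiveFunctionals

section CyclicPartition

variable {A : Type*} [CStarAlgebra A] (n : ℕ) [NeZero n] (u : A)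

/-- The normalized geometric sum `n⁻¹ ∑ⱼ (ζᵏu)ʲ`, where `ζ = exp(2πi/n)`. For a unitary `u` it is
concentrated near the spectral value `ζ⁻ᵏ`. -/
def cyclicAverage (k : ZMod n) : A :=
  (n : ℂ)⁻¹ • ∑ j ∈ Finset.range n, (ZMod.stdAddChar k • u) ^ j

variable {u}

theorem cyclicAverage_mem {S : StarSubalgebra ℂ A} (hu : u ∈ S) (k : ZMod n) :
    cyclicAverage n u k ∈ S :=
  S.smul_mem (sum_mem fun j _ => pow_mem (S.smul_mem hu _) j) _

theorem sum_stdAddChar_pow_mul_conj {i j : ℕ} (hi : i < n) (hj : j < n) :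
    ∑ k : ZMod n, ZMod.stdAddChar k ^ i * starRingEnd ℂ (ZMod.stdAddChar k ^ j) =
      if i = j then (n : ℂ) else 0 := by
  have hij : ((i : ZMod n) - j = 0) ↔ i = j := by
    rw [sub_eq_zero, ZMod.natCast_eq_natCast_iff', Nat.mod_eq_of_lt hi, Nat.mod_eq_of_lt hj]
  have h := AddChar.sum_mulShift ((i : ZMod n) - j) (ZMod.isPrimitive_stdAddChar n)
  simp only [hij, ZMod.card] at h
  push_cast at h
  rw [← h]
  refine Finset.sum_congr rfl fun k _ => ?_
  rw [mul_sub, sub_eq_add_neg, AddChar.map_add_eq_mul, AddChar.map_neg_eq_conj, mul_comm k,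
    mul_comm k, ← nsmul_eq_mul, ← nsmul_eq_mul, AddChar.map_nsmul_eq_pow,
    AddChar.map_nsmul_eq_pow]

theorem sum_cyclicAverage_mul_star (hu : u ∈ unitary A) :
    ∑ k, cyclicAverage n u k * star (cyclicAverage n u k) = 1 := by
  have hn : (n : ℂ) ≠ 0 := NeZero.ne _
  have hpow j : u ^ j * star u ^ j = 1 := by
    rw [← star_pow, (Unitary.mem_iff.1 (pow_mem hu j)).2]
  calc ∑ k, cyclicAverage n u k * star (cyclicAverage n u k)
      = ((n : ℂ)⁻¹ * (n : ℂ)⁻¹) • ∑ i ∈ Finset.range n, ∑ j ∈ Finset.range n,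
          (∑ k : ZMod n, ZMod.stdAddChar k ^ i * starRingEnd ℂ (ZMod.stdAddChar k ^ j)) •
            (u ^ i * star u ^ j) := by
        simp only [cyclicAverage, star_smul, star_sum, smul_mul_smul_comm, Finset.sum_mul_sum,
          smul_pow, star_pow, ← Finset.smul_sum, Finset.sum_smul]
        rw [Finset.sum_comm]
        simp [Finset.sum_comm (s := Finset.univ)]
    _ = ((n : ℂ)⁻¹ * (n : ℂ)⁻¹) • ∑ i ∈ Finset.range n, (n : ℂ) • 1 := by
        congr 1
        refine Finset.sum_congr rfl fun i hi => ?_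
        rw [← hpow i, ← Finset.sum_ite_eq_of_mem (Finset.range n) i
          (fun j => (n : ℂ) • (u ^ i * star u ^ j)) hi]
        refine Finset.sum_congr rfl fun j hj => ?_
        rw [sum_stdAddChar_pow_mul_conj n (Finset.mem_range.1 hi) (Finset.mem_range.1 hj), ite_smul,
          zero_smul]
    _ = 1 := by
        rw [Finset.sum_const, Finset.card_range, ← Nat.cast_smul_eq_nsmul ℂ, smul_smul, smul_smul]
        field_simp
        simp

theorem norm_sub_smul_mul_cyclicAverage_le (hu : u ∈ unitary A) (k : ZMod n) :
    ‖(u - ZMod.stdAddChar (-k) • 1) * cyclicAverage n u k‖ ≤ 2 / n := by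
  have hconj : ZMod.stdAddChar (-k) * ZMod.stdAddChar k = (1 : ℂ) := by
    rw [← AddChar.map_add_eq_mul, neg_add_cancel, AddChar.map_zero_eq_one]
  have hpow : (ZMod.stdAddChar k : ℂ) ^ n = 1 := by
    rw [← AddChar.map_nsmul_eq_pow, nsmul_eq_mul, ZMod.natCast_self, zero_mul,
      AddChar.map_zero_eq_one]
  have hgeom : (u - ZMod.stdAddChar (-k) • 1) * cyclicAverage n u k =
      (ZMod.stdAddChar (-k) * (n : ℂ)⁻¹) • (u ^ n - 1) := by
    have hfactor : u - (ZMod.stdAddChar (-k) : ℂ) • 1 =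
        (ZMod.stdAddChar (-k) : ℂ) • ((ZMod.stdAddChar k : ℂ) • u - 1) := by
      rw [smul_sub, smul_smul, hconj, one_smul]
    rw [hfactor, cyclicAverage, smul_mul_smul_comm, mul_geom_sum, smul_pow, hpow, one_smul]
  rcases subsingleton_or_nontrivial A with _ | _
  · rw [Subsingleton.elim (_ * _) (0 : A), norm_zero]
    positivity
  rw [hgeom, norm_smul, norm_mul, AddChar.norm_apply, one_mul, norm_inv, RCLike.norm_natCast,
    inv_mul_eq_div]
  gcongr
  calc ‖u ^ n - 1‖ ≤ ‖u ^ n‖ + ‖(1 : A)‖ := norm_sub_le _ _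
    _ = 2 := by
      rw [CStarRing.norm_of_mem_unitary (pow_mem hu n), CStarRing.norm_one]
      norm_num

end CyclicPartition

section ConditionalExpectations

variable {K : Type*} [NormedAddCommGroup K] [InnerProductSpace ℂ K] [CompleteSpace K]

theorem isPositive_star_mul_self (x : B K) : (star x * x).IsPositive :=
  isPositive_adjoint_comp_self x

theorem inner_mul_star_eq_of_tracial {N : VonNeumannAlgebra K} {ξ : K}
    (htr : ∀ a ∈ N, ∀ b ∈ N, ⟪ξ, (a * b) ξ⟫ = ⟪ξ, (b * a) ξ⟫) {T g : B K} (hT : T ∈ N)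
    (hg : g ∈ N) : ⟪ξ, (T * (g * star g)) ξ⟫ = ⟪g ξ, T (g ξ)⟫ := by
  rw [← mul_assoc, htr _ (mul_mem hT hg) _ (star_mem hg), mul_apply_eq_comp, inner_star_apply,
    mul_apply_eq_comp]

theorem eqOn_of_eqOn_unitary {N : VonNeumannAlgebra K} {f g : B K →ₗ[ℂ] ℂ}
    (h : ∀ u ∈ N, u ∈ unitary (B K) → f u = g u) {a : B K} (ha : a ∈ N) : f a = g a := by
  have hcl : IsClosed (N.toStarSubalgebra : Set (B K)) := by
    rw [VonNeumannAlgebra.coe_toStarSubalgebra, ← N.centralizer_centralizer]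
    exact Set.isClosed_centralizer _
  have hfg : f ∘ₗ N.toStarSubalgebra.subtype.toLinearMap =
      g ∘ₗ N.toStarSubalgebra.subtype.toLinearMap :=
    LinearMap.ext_on (CStarAlgebra.span_unitary N.toStarSubalgebra) fun u hu =>
      h u u.2 (Unitary.map_mem N.toStarSubalgebra.subtype hu)
  exact LinearMap.congr_fun hfg ⟨a, ha⟩

namespace IsConditionalExpectation

variable {N : VonNeumannAlgebra K} {E : B K →ₗ[ℂ] B K}

theorem inner_map_star_mul_self_nonneg (hE : IsConditionalExpectation K N E) (v : K) (x : B K) :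
    0 ≤ (vecFunctional K v v ∘ₗ E) (star x * x) :=
  (hE.positive _ (isPositive_star_mul_self x)).inner_nonneg_right v

theorem map_star (hE : IsConditionalExpectation K N E) (x : B K) : E (star x) = star (E x) :=
  coe_injective <| (ext_inner_map _ _).1 fun v => by
    have h : ⟪v, E (star x) v⟫ = starRingEnd ℂ ⟪v, E x v⟫ :=
      map_star_of_nonneg (hE.inner_map_star_mul_self_nonneg v) x
    rw [coe_coe, coe_coe, star_apply_inner, ← inner_conj_symm, h, Complex.conj_conj]

theorem norm_inner_map_mul_sub_le (hE : IsConditionalExpectation K N E) (y : B K) {b : B K}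
    (hb : b ∈ N) (v : K) :
    ‖⟪v, (E (y * b) - E y * b) v⟫‖ ≤
      (√‖E (y * star y)‖ + ‖E y‖) * ‖v‖ * ‖b v‖ := by
  have hmap : ‖⟪v, E (y * b) v⟫‖ ≤ √‖E (y * star y)‖ * ‖v‖ * ‖b v‖ := by
    have hcs := norm_map_star_mul_sq_le (hE.inner_map_star_mul_self_nonneg v) (star y) b
    simp only [LinearMap.comp_apply, star_star, hE.fixes _ (mul_mem (star_mem hb) hb)] at hcs
    have hy : (⟪v, E (y * star y) v⟫).re ≤ ‖E (y * star y)‖ * ‖v‖ * ‖v‖ :=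
      calc (⟪v, E (y * star y) v⟫).re ≤ ‖v‖ * ‖E (y * star y) v‖ :=
          (Complex.re_le_norm _).trans (norm_inner_le_norm _ _)
        _ ≤ ‖v‖ * (‖E (y * star y)‖ * ‖v‖) := by gcongr; exact le_opNorm _ _
        _ = _ := by ring
    have hb' : (⟪v, (star b * b) v⟫).re = ‖b v‖ ^ 2 := by
      rw [← inner_apply_apply, inner_self_eq_ofReal_norm_sq, Complex.ofReal_re]
    refine abs_le_of_sq_le_sq' ?_ (by positivity) |>.2
    calc ‖⟪v, E (y * b) v⟫‖ ^ 2
        ≤ (⟪v, E (y * star y) v⟫).re * (⟪v, (star b * b) v⟫).re := hcs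
      _ ≤ ‖E (y * star y)‖ * ‖v‖ * ‖v‖ * ‖b v‖ ^ 2 := by rw [hb']; gcongr
      _ = (√‖E (y * star y)‖ * ‖v‖ * ‖b v‖) ^ 2 := by
        rw [mul_pow, mul_pow, Real.sq_sqrt (norm_nonneg _)]
        ring
  have hmul : ‖⟪v, (E y * b) v⟫‖ ≤ ‖E y‖ * ‖v‖ * ‖b v‖ :=
    calc ‖⟪v, (E y * b) v⟫‖ ≤ ‖v‖ * (‖E y‖ * ‖b v‖) :=
          (norm_inner_le_norm _ _).trans (by gcongr; exact le_opNorm (E y) (b v))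
      _ = _ := by ring
  rw [sub_apply, inner_sub_right]
  linarith [norm_sub_le ⟪v, E (y * b) v⟫ ⟪v, (E y * b) v⟫]

theorem norm_inner_map_mul_sub_le_sub_smul (hE : IsConditionalExpectation K N E) (y : B K)
    {a : B K} (ha : a ∈ N) (c : ℂ) (v : K) :
    ‖⟪v, (E (y * a) - E y * a) v⟫‖ ≤
      (√‖E (y * star y)‖ + ‖E y‖) * ‖v‖ * ‖(a - c • 1) v‖ := by
  have h := hE.norm_inner_map_mul_sub_le y
    (N.toStarSubalgebra.sub_mem ha (N.toStarSubalgebra.smul_mem (one_mem _) c)) v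
  simpa [mul_sub] using h

variable {ξ : K}

-- Positivity of `E` only bounds the defect `E(yb) - E(y)b` at a vector `v` by `‖v‖ ‖b v‖`. The
-- unitary `u` is close to the scalar `ζ⁻ᵏ` on the vectors `gₖ ξ`, and by the trace property the
-- partition `∑ₖ gₖ gₖ* = 1` splits the defect at `ξ` into the small defects at the `gₖ ξ`.
theorem norm_inner_map_mul_unitary_sub_le (hE : IsConditionalExpectation K N E)
    (htr : ∀ a ∈ N, ∀ b ∈ N, ⟪ξ, (a * b) ξ⟫ = ⟪ξ, (b * a) ξ⟫) (y : B K) {u : B K}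
    (huN : u ∈ N) (hu : u ∈ unitary (B K)) (n : ℕ) [NeZero n] :
    ‖⟪ξ, (E (y * u) - E y * u) ξ⟫‖ ≤
      (√‖E (y * star y)‖ + ‖E y‖) * (2 * ‖ξ‖ ^ 2) / √n := by
  set C := √‖E (y * star y)‖ + ‖E y‖
  set T := E (y * u) - E y * u
  have hT : T ∈ N := sub_mem (hE.mem_range _) (mul_mem (hE.mem_range _) huN)
  let g (k : ZMod n) : B K := cyclicAverage n u k
  have hg k : g k ∈ N := cyclicAverage_mem n (S := N.toStarSubalgebra) huN k
  have hsum (R : B K) (hR : R ∈ N) : ⟪ξ, R ξ⟫ = ∑ k, ⟪g k ξ, R (g k ξ)⟫ := by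
    conv_lhs => rw [← mul_one R, ← sum_cyclicAverage_mul_star n hu, Finset.mul_sum, sum_apply,
      inner_sum]
    exact Finset.sum_congr rfl fun k _ => inner_mul_star_eq_of_tracial htr hR (hg k)
  have hsq : ∑ k, ‖g k ξ‖ ^ 2 = ‖ξ‖ ^ 2 := by
    have h := hsum 1 (one_mem N)
    simp only [one_apply_eq_self, inner_self_eq_ofReal_norm_sq] at h
    exact_mod_cast h.symm
  have hterm k : ‖⟪g k ξ, T (g k ξ)⟫‖ ≤ C * (2 / n * ‖ξ‖) * ‖g k ξ‖ := by
    have h := hE.norm_inner_map_mul_sub_le_sub_smul y huN (ZMod.stdAddChar (-k)) (g k ξ)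
    have hk : ‖(u - (ZMod.stdAddChar (-k) : ℂ) • 1) (g k ξ)‖ ≤ 2 / n * ‖ξ‖ :=
      le_of_opNorm_le _ (norm_sub_smul_mul_cyclicAverage_le n hu k) ξ
    calc _ ≤ C * ‖g k ξ‖ * (2 / n * ‖ξ‖) := h.trans (by gcongr)
      _ = _ := by ring
  have hcs : ∑ k, ‖g k ξ‖ ≤ √n * ‖ξ‖ := by
    refine abs_le_of_sq_le_sq' ?_ (by positivity) |>.2
    have h := sq_sum_le_card_mul_sum_sq (s := Finset.univ) (f := fun k => ‖g k ξ‖)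
    rwa [hsq, Finset.card_univ, ZMod.card, ← Real.sq_sqrt n.cast_nonneg, ← mul_pow] at h
  calc ‖⟪ξ, T ξ⟫‖ ≤ ∑ k, C * (2 / n * ‖ξ‖) * ‖g k ξ‖ := by
        rw [hsum T hT]
        exact (norm_sum_le _ _).trans (Finset.sum_le_sum fun k _ => hterm k)
    _ ≤ C * (2 / n * ‖ξ‖) * (√n * ‖ξ‖) := by
        rw [← Finset.mul_sum]
        gcongr
    _ = C * (2 * ‖ξ‖ ^ 2) * (√n / n) := by ring
    _ = C * (2 * ‖ξ‖ ^ 2) / √n := by rw [Real.sqrt_div_self', mul_one_div]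

theorem inner_map_mul_unitary (hE : IsConditionalExpectation K N E)
    (htr : ∀ a ∈ N, ∀ b ∈ N, ⟪ξ, (a * b) ξ⟫ = ⟪ξ, (b * a) ξ⟫) (y : B K) {u : B K}
    (huN : u ∈ N) (hu : u ∈ unitary (B K)) : ⟪ξ, E (y * u) ξ⟫ = ⟪ξ, (E y * u) ξ⟫ := by
  rw [← sub_eq_zero, ← inner_sub_right, ← sub_apply, ← norm_le_zero_iff]
  have hlim : Tendsto (fun n : ℕ => (√‖E (y * star y)‖ + ‖E y‖) * (2 * ‖ξ‖ ^ 2) / √n) atTop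
      (𝓝 0) :=
    (Real.tendsto_sqrt_atTop.comp tendsto_natCast_atTop_atTop).const_div_atTop _
  refine ge_of_tendsto hlim ((eventually_ne_atTop 0).mono fun n hn => ?_)
  have : NeZero n := ⟨hn⟩
  exact hE.norm_inner_map_mul_unitary_sub_le htr y huN hu n

theorem inner_map_mul_right (hE : IsConditionalExpectation K N E)
    (htr : ∀ a ∈ N, ∀ b ∈ N, ⟪ξ, (a * b) ξ⟫ = ⟪ξ, (b * a) ξ⟫) (y : B K) {a : B K}
    (ha : a ∈ N) : ⟪ξ, E (y * a) ξ⟫ = ⟪ξ, (E y * a) ξ⟫ :=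
  eqOn_of_eqOn_unitary (f := vecFunctional K ξ ξ ∘ₗ E ∘ₗ LinearMap.mulLeft ℂ y)
    (g := vecFunctional K ξ ξ ∘ₗ LinearMap.mulLeft ℂ (E y))
    (fun _ huN hu => hE.inner_map_mul_unitary htr y huN hu) ha

theorem inner_map_mul_left (hE : IsConditionalExpectation K N E)
    (htr : ∀ a ∈ N, ∀ b ∈ N, ⟪ξ, (a * b) ξ⟫ = ⟪ξ, (b * a) ξ⟫) {a : B K} (ha : a ∈ N)
    (y : B K) : ⟪ξ, E (a * y) ξ⟫ = ⟪ξ, (a * E y) ξ⟫ := by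
  have h := congrArg (starRingEnd ℂ) (hE.inner_map_mul_right htr (star y) (star_mem ha))
  rwa [← star_mul, hE.map_star, hE.map_star, ← star_mul, inner_conj_symm, inner_conj_symm,
    star_apply_inner, star_apply_inner] at h

theorem inner_map_star_mul_mul (hE : IsConditionalExpectation K N E)
    (htr : ∀ a ∈ N, ∀ b ∈ N, ⟪ξ, (a * b) ξ⟫ = ⟪ξ, (b * a) ξ⟫) {a : B K} (ha : a ∈ N)
    (x : B K) : ⟪ξ, E (star a * x * a) ξ⟫ = ⟪a ξ, E x (a ξ)⟫ :=
  calc ⟪ξ, E (star a * x * a) ξ⟫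
      = ⟪ξ, (star a * E (x * a)) ξ⟫ := by
        rw [mul_assoc, hE.inner_map_mul_left htr (star_mem ha)]
    _ = ⟪ξ, E (x * (a * star a)) ξ⟫ := by
        rw [htr _ (star_mem ha) _ (hE.mem_range _),
          ← hE.inner_map_mul_right htr _ (star_mem ha), mul_assoc]
    _ = ⟪a ξ, E x (a ξ)⟫ := by
        rw [hE.inner_map_mul_right htr _ (mul_mem ha (star_mem ha)),
          inner_mul_star_eq_of_tracial htr (hE.mem_range _) ha]

end IsConditionalExpectation

end ConditionalExpectations

section HilbertSums

variable {ι F K : Type*}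
  [NormedAddCommGroup F] [InnerProductSpace ℂ F] [CompleteSpace F]
  [NormedAddCommGroup K] [InnerProductSpace ℂ K] [CompleteSpace K]

theorem isHilbertSum_of_inner {V : ι → F →ₗᵢ[ℂ] K}
    (horth : Pairwise fun i j => ∀ v w, ⟪V i v, V j w⟫ = 0)
    (htotal : ∀ w, (∀ i v, ⟪V i v, w⟫ = 0) → w = 0) : IsHilbertSum ℂ (fun _ => F) V := by
  refine .mk horth ((Submodule.topologicalClosure_eq_top_iff.2 ?_).ge)
  refine (Submodule.eq_bot_iff _).2 fun w hw => htotal w fun i v => ?_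
  exact Submodule.inner_right_of_mem_orthogonal
    (Submodule.mem_iSup_of_mem i (LinearMap.mem_range_self _ v)) hw

/-- The block `Vᵢ* T Vⱼ` of an operator with respect to a family of isometric embeddings. -/
def block (V : ι → F →ₗᵢ[ℂ] K) (T : B K) (i j : ι) : B F :=
  adjoint (V i).toContinuousLinearMap ∘L T ∘L (V j).toContinuousLinearMap

theorem block_apply (V : ι → F →ₗᵢ[ℂ] K) (T : B K) (i j : ι) (v : F) :
    block V T i j v = adjoint (V i).toContinuousLinearMap (T (V j v)) := rfl

theorem inner_block (V : ι → F →ₗᵢ[ℂ] K) (T : B K) (i j : ι) (v w : F) :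
    ⟪v, block V T i j w⟫ = ⟪V i v, T (V j w)⟫ := by
  rw [block_apply, adjoint_inner_right, LinearIsometry.coe_toContinuousLinearMap]

theorem star_block (V : ι → F →ₗᵢ[ℂ] K) (T : B K) (i j : ι) :
    star (block V T i j) = block V (star T) j i :=
  ext_inner_apply fun v w => by
    rw [inner_block, inner_star_apply, inner_star_apply, ← inner_conj_symm, inner_block,
      inner_conj_symm]

/-- The diagonal representation `X ↦ ⨁ᵢ X` of `B(F)` on the Hilbert sum of copies of `F`. -/
def diagonalHom (ι F : Type*) [NormedAddCommGroup F] [InnerProductSpace ℂ F] [CompleteSpace F] :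
    B F →⋆ₐ[ℂ] B (lp (fun _ : ι => F) 2) where
  toFun X := lp.mapCLM 2 (fun _ => X) (norm_nonneg X) fun _ => le_rfl
  map_one' := by ext; rfl
  map_mul' X Y := by ext; rfl
  map_zero' := by ext; rfl
  map_add' X Y := by ext; rfl
  commutes' c := by ext; rfl
  map_star' X := ext_inner_apply fun v w => by
    rw [inner_star_apply]
    simp only [lp.inner_eq_tsum, lp.mapCLM_apply_coe, inner_star_apply]

variable {V : ι → F →ₗᵢ[ℂ] K}

omit [CompleteSpace F] in
theorem ext_hilbertSum (hV : IsHilbertSum ℂ (fun _ => F) V) {X Y : B K}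
    (h : ∀ i v, X (V i v) = Y (V i v)) : X = Y := by
  refine ContinuousLinearMap.ext fun w => ?_
  have hw := hV.hasSum_linearIsometryEquiv_symm (hV.linearIsometryEquiv w)
  rw [LinearIsometryEquiv.symm_apply_apply] at hw
  refine (X.hasSum hw).unique ?_
  simpa only [h] using Y.hasSum hw

theorem hasSum_inner_adjoint (hV : IsHilbertSum ℂ (fun _ => F) V) (v w : K) :
    HasSum (fun i => ⟪adjoint (V i).toContinuousLinearMap v,
      adjoint (V i).toContinuousLinearMap w⟫) ⟪v, w⟫ := by
  classical
  have h i w : hV.linearIsometryEquiv w i = adjoint (V i).toContinuousLinearMap w :=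
    ext_inner_left ℂ fun u => by
      have hu := lp.inner_single_left (𝕜 := ℂ) i u (hV.linearIsometryEquiv w)
      rw [← hV.linearIsometryEquiv.symm.inner_map_map, LinearIsometryEquiv.symm_apply_apply,
        hV.linearIsometryEquiv_symm_apply_single] at hu
      rw [adjoint_inner_right]
      exact hu.symm
  have hsum := lp.hasSum_inner (𝕜 := ℂ) (hV.linearIsometryEquiv v) (hV.linearIsometryEquiv w)
  simpa only [h, LinearIsometryEquiv.inner_map_map] using hsum

theorem ext_block (hV : IsHilbertSum ℂ (fun _ => F) V) {X Y : B K}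
    (h : ∀ i j, block V X i j = block V Y i j) : X = Y :=
  ext_hilbertSum hV fun j w => ext_inner_left ℂ fun u =>
    (hasSum_inner_adjoint hV u (X (V j w))).unique <| by
      simpa only [← block_apply, h] using hasSum_inner_adjoint hV u (Y (V j w))

variable (hV : IsHilbertSum ℂ (fun _ => F) V)

/-- The representation of `B(F)` on a Hilbert sum `K` of copies of `F`: if `K = ℓ²(ι) ⊗ F`, this
is `X ↦ 1 ⊗ X`. -/
def amplify : B F →⋆ₐ[ℂ] B K :=
  hV.linearIsometryEquiv.symm.conjStarAlgEquiv.toStarAlgHom.comp (diagonalHom ι F)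

theorem amplify_apply (X : B F) (i : ι) (v : F) : amplify hV X (V i v) = V i (X v) := by
  classical
  have h v : hV.linearIsometryEquiv (V i v) = lp.single 2 i v := by
    rw [← hV.linearIsometryEquiv_symm_apply_single, LinearIsometryEquiv.apply_symm_apply]
  have hsingle : diagonalHom ι F X (lp.single 2 i v) = lp.single 2 i (X v) := by
    ext j
    exact Pi.apply_single (fun _ => X) (fun _ => map_zero X) i v j
  calc amplify hV X (V i v)
      = hV.linearIsometryEquiv.symm (diagonalHom ι F X (hV.linearIsometryEquiv (V i v))) := rfl
    _ = V i (X v) := by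
      rw [h, hsingle, hV.linearIsometryEquiv_symm_apply_single]

theorem block_mul_amplify (T : B K) (Y : B F) (i j : ι) :
    block V (T * amplify hV Y) i j = block V T i j * Y :=
  ContinuousLinearMap.ext fun v => by
    rw [block_apply, mul_apply_eq_comp, amplify_apply, mul_apply_eq_comp, block_apply]

theorem block_amplify_mul (T : B K) (Y : B F) (i j : ι) :
    block V (amplify hV Y * T) i j = Y * block V T i j := by
  rw [← star_inj, star_block, star_mul, ← map_star, block_mul_amplify, star_mul, star_block]

theorem commute_amplify_iff {T : B K} {Y : B F} :
    Commute T (amplify hV Y) ↔ ∀ i j, Commute (block V T i j) Y := by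
  constructor
  · intro h i j
    rw [Commute, SemiconjBy, ← block_mul_amplify hV, h.eq, block_amplify_mul]
  · exact fun h => ext_block hV fun i j => by
      rw [block_mul_amplify, (h i j).eq, block_amplify_mul]

theorem hasSum_inner_star_block (T : B K) (Y : B F) (i j : ι) (v w : F) :
    HasSum (fun k => ⟪star (block V T i k) v, Y (star (block V T j k) w)⟫)
      ⟪V i v, (T * amplify hV Y * star T) (V j w)⟫ := by
  rw [mul_assoc, mul_apply_eq_comp, ← star_apply_inner]
  have h k : adjoint (V k).toContinuousLinearMap ((amplify hV Y * star T) (V j w)) =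
      Y (star (block V T j k) w) := by
    rw [← block_apply, block_amplify_mul, star_block, mul_apply_eq_comp]
  simpa only [h, star_block, block_apply] using
    hasSum_inner_adjoint hV (star T (V i v)) ((amplify hV Y * star T) (V j w))

end HilbertSums

namespace LCQG

variable (Q : LCQG H H2)

section TensorProduct

theorem norm_tmul (a b : H) : ‖Q.tmul a b‖ = ‖a‖ * ‖b‖ := by
  have h : ‖Q.tmul a b‖ ^ 2 = (‖a‖ * ‖b‖) ^ 2 := by
    have h := Q.tmul_inner a b a b
    simp only [inner_self_eq_ofReal_norm_sq] at h
    rw [mul_pow]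
    exact_mod_cast h
  exact (pow_left_inj₀ (by positivity) (by positivity) two_ne_zero).1 h

/-- The operator `b ↦ a ⊗ b`, whose adjoint pairs the first leg with `a`. -/
def ketL (a : H) : H →L[ℂ] H2 :=
  (Q.tmul a).mkContinuous ‖a‖ fun b => (Q.norm_tmul a b).le

/-- The operator `a ↦ a ⊗ b`, whose adjoint pairs the second leg with `b`. -/
def ketR (b : H) : H →L[ℂ] H2 :=
  (Q.tmul.flip b).mkContinuous ‖b‖ fun a => by
    rw [LinearMap.flip_apply, Q.norm_tmul, mul_comm]

@[simp]
theorem ketL_apply (a b : H) : Q.ketL a b = Q.tmul a b := rfl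

@[simp]
theorem ketR_apply (a b : H) : Q.ketR b a = Q.tmul a b := rfl

theorem dense_span_tmul : Dense (Submodule.span ℂ {v : H2 | ∃ a b, v = Q.tmul a b} : Set H2) :=
  Submodule.dense_iff_topologicalClosure_eq_top.2 Q.tmul_total

theorem ext_tmul {F : Type*} [NormedAddCommGroup F] [NormedSpace ℂ F] {X Y : H2 →L[ℂ] F}
    (h : ∀ a b, X (Q.tmul a b) = Y (Q.tmul a b)) : X = Y :=
  ContinuousLinearMap.ext_on Q.dense_span_tmul <| by
    rintro _ ⟨a, b, rfl⟩
    exact h a b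

theorem ext_inner_tmul_left {v w : H2} (h : ∀ a b, ⟪Q.tmul a b, v⟫ = ⟪Q.tmul a b, w⟫) :
    v = w := by
  have hinner : innerSL ℂ v = innerSL ℂ w := Q.ext_tmul fun a b => by
    rw [innerSL_apply_apply, innerSL_apply_apply, ← inner_conj_symm, h, inner_conj_symm]
  exact ext_inner_right ℂ fun u => DFunLike.congr_fun hinner u

theorem ext_inner_tmul {X Y : B H2}
    (h : ∀ a b c d, ⟪Q.tmul a b, X (Q.tmul c d)⟫ = ⟪Q.tmul a b, Y (Q.tmul c d)⟫) : X = Y :=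
  Q.ext_tmul fun c d => Q.ext_inner_tmul_left fun a b => h a b c d

theorem tensorOp_mul (x y x' y' : B H) :
    Q.tensorOp x y * Q.tensorOp x' y' = Q.tensorOp (x * x') (y * y') :=
  Q.ext_tmul fun a b => by simp only [mul_apply_eq_comp, Q.tensorOp_apply]

theorem tensorOp_one_one : Q.tensorOp 1 1 = 1 :=
  Q.ext_tmul fun a b => by simp only [Q.tensorOp_apply, one_apply_eq_self]

theorem star_tensorOp (x y : B H) : star (Q.tensorOp x y) = Q.tensorOp (star x) (star y) :=
  Q.ext_inner_tmul fun a b c d => by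
    simp only [inner_star_apply, Q.tensorOp_apply, Q.tmul_inner]

theorem flipU_mul_flipU : Q.flipU * Q.flipU = 1 :=
  Q.ext_tmul fun a b => by simp only [mul_apply_eq_comp, Q.flipU_apply, one_apply_eq_self]

theorem star_flipU : star Q.flipU = Q.flipU :=
  Q.ext_inner_tmul fun a b c d => by
    simp only [inner_star_apply, Q.flipU_apply, Q.tmul_inner, mul_comm]

theorem flipU_mul_tensorOp (x y : B H) :
    Q.flipU * Q.tensorOp x y = Q.tensorOp y x * Q.flipU :=
  Q.ext_tmul fun a b => by simp only [mul_apply_eq_comp, Q.flipU_apply, Q.tensorOp_apply]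

variable {ι : Type*} (e : HilbertBasis ι ℂ H)

/-- The product Hilbert basis `eᵢ ⊗ eⱼ` of the tensor square. -/
def tensorBasis : HilbertBasis (ι × ι) ℂ H2 :=
  .mkOfOrthogonalEqBot (v := fun p : ι × ι => Q.tmul (e p.1) (e p.2))
    (by
      classical
      rw [orthonormal_iff_ite]
      intro p q
      simp only [Q.tmul_inner, orthonormal_iff_ite.1 e.orthonormal, Prod.ext_iff, ite_and,
        mul_ite, mul_one, mul_zero]
      split_ifs <;> rfl)
    (by
      refine (Submodule.eq_bot_iff _).2 fun v hv => ?_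
      have hbasis i j : ⟪Q.tmul (e i) (e j), v⟫ = 0 :=
        Submodule.inner_right_of_mem_orthogonal
          (Submodule.subset_span (Set.mem_range_self (i, j))) hv
      have hleft i : adjoint (Q.ketL (e i)) v = 0 :=
        eq_of_inner_basis_eq e fun j => by
          rw [adjoint_inner_right, ketL_apply, hbasis, inner_zero_right]
      have hright b : adjoint (Q.ketR b) v = 0 :=
        eq_of_inner_basis_eq e fun i => by
          rw [adjoint_inner_right, ketR_apply, ← ketL_apply, ← adjoint_inner_right, hleft,
            inner_zero_right, inner_zero_right]
      exact Q.ext_inner_tmul_left fun a b => by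
        rw [← ketR_apply, ← adjoint_inner_right, hright, inner_zero_right, inner_zero_right])

theorem tensorBasis_apply (p : ι × ι) : Q.tensorBasis e p = Q.tmul (e p.1) (e p.2) := by
  simp [tensorBasis]

theorem hasSum_inner_adjoint_ketL (v w : H2) :
    HasSum (fun i => ⟪adjoint (Q.ketL (e i)) v, adjoint (Q.ketL (e i)) w⟫) ⟪v, w⟫ := by
  refine ((Q.tensorBasis e).hasSum_inner_mul_inner v w).prod_fiberwise fun i => ?_
  convert e.hasSum_inner_mul_inner (adjoint (Q.ketL (e i)) v) (adjoint (Q.ketL (e i)) w) using 2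
  simp only [tensorBasis_apply, adjoint_inner_left, adjoint_inner_right, ketL_apply]

theorem rankOne_tmul (a b c d : H) :
    InnerProductSpace.rankOne ℂ (Q.tmul a b) (Q.tmul c d) =
      Q.tensorOp (InnerProductSpace.rankOne ℂ a c) (InnerProductSpace.rankOne ℂ b d) :=
  Q.ext_tmul fun p q => by
    simp only [InnerProductSpace.rankOne_apply, Q.tensorOp_apply, Q.tmul_inner, map_smul,
      LinearMap.smul_apply, smul_smul, mul_comm]

theorem ext_tensorOp {F G : B H2 →ₗ[ℂ] ℂ} (hF : IsNormalFunctional H2 F)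
    (hG : IsNormalFunctional H2 G)
    (h : ∀ x y, F (Q.tensorOp x y) = G (Q.tensorOp x y)) : F = G := by
  obtain ⟨s, e, -⟩ := exists_hilbertBasis ℂ H
  refine LinearMap.ext fun X => tendsto_nhds_unique (hF.tendsto_basisProj (Q.tensorBasis e) X) ?_
  convert hG.tendsto_basisProj (Q.tensorBasis e) X using 2 with S
  simp only [basisProj_mul_mul_basisProj, map_sum, map_smul, tensorBasis_apply, rankOne_tmul, h]

end TensorProduct

section Slices

theorem funcTensor_vecFunctional (a b c d : H) :
    Q.funcTensor (vecFunctional H a b) (vecFunctional H c d) =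
      vecFunctional H2 (Q.tmul a c) (Q.tmul b d) :=
  Q.ext_tensorOp
    (Q.funcTensor_normal _ _ (isNormalFunctional_vecFunctional a b)
      (isNormalFunctional_vecFunctional c d))
    (isNormalFunctional_vecFunctional _ _) fun x y => by
      simp only [Q.funcTensor_elem, vecFunctional, LinearMap.coe_mk, AddHom.coe_mk,
        Q.tensorOp_apply, Q.tmul_inner]

theorem inner_sliceL_vecFunctional (c d p q : H) (X : B H2) :
    ⟪p, Q.sliceL (vecFunctional H c d) X q⟫ = ⟪Q.tmul d p, X (Q.tmul c q)⟫ := by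
  have h := Q.sliceL_char (vecFunctional H c d) X q p
  rwa [funcTensor_vecFunctional] at h

theorem inner_sliceR_vecFunctional (c d p q : H) (X : B H2) :
    ⟪p, Q.sliceR (vecFunctional H c d) X q⟫ = ⟪Q.tmul p d, X (Q.tmul q c)⟫ := by
  have h := Q.sliceR_char (vecFunctional H c d) X q p
  rwa [funcTensor_vecFunctional] at h

theorem adjoint_ketL_apply (c d q : H) (X : B H2) :
    adjoint (Q.ketL d) (X (Q.tmul c q)) = Q.sliceL (vecFunctional H c d) X q :=
  ext_inner_left ℂ fun p => by
    rw [adjoint_inner_right, ketL_apply, inner_sliceL_vecFunctional]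

theorem sliceL_mul_tensorOp (c d : H) (X : B H2) (y : B H) :
    Q.sliceL (vecFunctional H c d) (X * Q.tensorOp 1 y) =
      Q.sliceL (vecFunctional H c d) X * y :=
  ext_inner_apply fun p q => by
    simp only [mul_apply_eq_comp, inner_sliceL_vecFunctional, Q.tensorOp_apply, one_apply_eq_self]

theorem sliceL_tensorOp_mul (c d : H) (X : B H2) (y : B H) :
    Q.sliceL (vecFunctional H c d) (Q.tensorOp 1 y * X) =
      y * Q.sliceL (vecFunctional H c d) X :=
  ext_inner_apply fun p q => by
    rw [inner_sliceL_vecFunctional, mul_apply_eq_comp, ← star_apply_inner, star_tensorOp,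
      Q.tensorOp_apply, star_one, one_apply_eq_self, ← inner_sliceL_vecFunctional,
      star_apply_inner, mul_apply_eq_comp]

theorem sliceR_mul_tensorOp (c d : H) (X : B H2) (y : B H) :
    Q.sliceR (vecFunctional H c d) (X * Q.tensorOp y 1) =
      Q.sliceR (vecFunctional H c d) X * y :=
  ext_inner_apply fun p q => by
    simp only [mul_apply_eq_comp, inner_sliceR_vecFunctional, Q.tensorOp_apply, one_apply_eq_self]

theorem sliceR_tensorOp_mul (c d : H) (X : B H2) (y : B H) :
    Q.sliceR (vecFunctional H c d) (Q.tensorOp y 1 * X) =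
      y * Q.sliceR (vecFunctional H c d) X :=
  ext_inner_apply fun p q => by
    rw [inner_sliceR_vecFunctional, mul_apply_eq_comp, ← star_apply_inner, star_tensorOp,
      Q.tensorOp_apply, star_one, one_apply_eq_self, ← inner_sliceR_vecFunctional,
      star_apply_inner, mul_apply_eq_comp]

theorem commute_sliceL {X : B H2} {y : B H} (h : Commute X (Q.tensorOp 1 y)) (c d : H) :
    Commute (Q.sliceL (vecFunctional H c d) X) y := by
  rw [Commute, SemiconjBy, ← sliceL_mul_tensorOp, h.eq, sliceL_tensorOp_mul]

theorem commute_sliceR {X : B H2} {y : B H} (h : Commute X (Q.tensorOp y 1)) (c d : H) :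
    Commute (Q.sliceR (vecFunctional H c d) X) y := by
  rw [Commute, SemiconjBy, ← sliceR_mul_tensorOp, h.eq, sliceR_tensorOp_mul]

theorem ext_sliceL {X Y : B H2} (h : ∀ c d, Q.sliceL (vecFunctional H c d) X =
    Q.sliceL (vecFunctional H c d) Y) : X = Y :=
  Q.ext_inner_tmul fun a b c d => by
    rw [← inner_sliceL_vecFunctional, h, inner_sliceL_vecFunctional]

theorem ext_sliceR {X Y : B H2} (h : ∀ c d, Q.sliceR (vecFunctional H c d) X =
    Q.sliceR (vecFunctional H c d) Y) : X = Y :=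
  Q.ext_inner_tmul fun a b c d => by
    rw [← inner_sliceR_vecFunctional, h, inner_sliceR_vecFunctional]

theorem commute_tensorOp_of_commute_sliceL {X : B H2} {y : B H}
    (h : ∀ c d, Commute (Q.sliceL (vecFunctional H c d) X) y) : Commute X (Q.tensorOp 1 y) :=
  Q.ext_sliceL fun c d => by rw [sliceL_mul_tensorOp, (h c d).eq, sliceL_tensorOp_mul]

theorem commute_tensorOp_of_commute_sliceR {X : B H2} {y : B H}
    (h : ∀ c d, Commute (Q.sliceR (vecFunctional H c d) X) y) : Commute X (Q.tensorOp y 1) :=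
  Q.ext_sliceR fun c d => by rw [sliceR_mul_tensorOp, (h c d).eq, sliceR_tensorOp_mul]

end Slices

end LCQG

section Membership

theorem mem_of_forall_commute {N : VonNeumannAlgebra H} {x : B H}
    (h : ∀ a ∈ N.commutant, Commute x a) : x ∈ N := by
  rw [← N.commutant_commutant, VonNeumannAlgebra.mem_commutant_iff]
  exact fun a ha => (h a ha).eq.symm

theorem commute_of_mem_commutant {N : VonNeumannAlgebra H} {x a : B H} (hx : x ∈ N)
    (ha : a ∈ N.commutant) : Commute x a :=
  VonNeumannAlgebra.mem_commutant_iff.1 ha x hx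

end Membership

namespace LCQG

variable (Q : LCQG H H2)

theorem sliceL_W_mem (c d : H) : Q.sliceL (vecFunctional H c d) Q.W ∈ Q.Mhat :=
  mem_of_forall_commute fun a ha => Q.commute_sliceL (Q.W_mem 1 (one_mem _) a ha) c d

/-- The operators on the tensor square whose slices all lie in `L∞(𝔾̂)`, i.e. the von Neumann
algebra `L∞(𝔾̂) ⊗̄ L∞(𝔾̂)`, given by the commutation theorem. -/
def dualTensor : StarSubalgebra ℂ (B H2) :=
  StarSubalgebra.centralizer ℂ
    {Y | ∃ a ∈ Q.Mhat.commutant, Y = Q.tensorOp a 1 ∨ Y = Q.tensorOp 1 a}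

variable {Q}

theorem mem_dualTensor_iff {Y : B H2} : Y ∈ Q.dualTensor ↔
    ∀ a ∈ Q.Mhat.commutant, Commute Y (Q.tensorOp a 1) ∧ Commute Y (Q.tensorOp 1 a) := by
  rw [dualTensor, StarSubalgebra.mem_centralizer_iff]
  constructor
  · exact fun h a ha => ⟨(h _ ⟨a, ha, .inl rfl⟩).1.symm, (h _ ⟨a, ha, .inr rfl⟩).1.symm⟩
  · rintro h _ ⟨a, ha, rfl | rfl⟩
    · rw [star_tensorOp, star_one]
      exact ⟨(h a ha).1.eq.symm, (h _ (star_mem ha)).1.eq.symm⟩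
    · rw [star_tensorOp, star_one]
      exact ⟨(h a ha).2.eq.symm, (h _ (star_mem ha)).2.eq.symm⟩

theorem sliceL_mem_of_mem_dualTensor {Y : B H2} (hY : Y ∈ Q.dualTensor) (c d : H) :
    Q.sliceL (vecFunctional H c d) Y ∈ Q.Mhat :=
  mem_of_forall_commute fun a ha => Q.commute_sliceL (mem_dualTensor_iff.1 hY a ha).2 c d

theorem sliceR_mem_of_mem_dualTensor {Y : B H2} (hY : Y ∈ Q.dualTensor) (c d : H) :
    Q.sliceR (vecFunctional H c d) Y ∈ Q.Mhat :=
  mem_of_forall_commute fun a ha => Q.commute_sliceR (mem_dualTensor_iff.1 hY a ha).1 c d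

theorem mem_dualTensor_of_slices {Y : B H2}
    (hL : ∀ c d, Q.sliceL (vecFunctional H c d) Y ∈ Q.Mhat)
    (hR : ∀ c d, Q.sliceR (vecFunctional H c d) Y ∈ Q.Mhat) : Y ∈ Q.dualTensor :=
  mem_dualTensor_iff.2 fun _ ha =>
    ⟨Q.commute_tensorOp_of_commute_sliceR fun c d => commute_of_mem_commutant (hR c d) ha,
      Q.commute_tensorOp_of_commute_sliceL fun c d => commute_of_mem_commutant (hL c d) ha⟩

theorem tensorOp_mem_dualTensor {a b : B H} (ha : a ∈ Q.Mhat) (hb : b ∈ Q.Mhat) :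
    Q.tensorOp a b ∈ Q.dualTensor :=
  mem_dualTensor_iff.2 fun c hc => by
    simp only [Commute, SemiconjBy, tensorOp_mul, mul_one, one_mul,
      (commute_of_mem_commutant ha hc).eq, (commute_of_mem_commutant hb hc).eq, and_self]

variable (Q)

/-- The opposite `y ↦ W(y ⊗ 1)W*` of the co-multiplication of the dual. -/
def oppDeltahat (y : B H) : B H2 := Q.W * Q.tensorOp y 1 * star Q.W

theorem Deltahat_eq_flipU_conj (y : B H) :
    Q.Deltahat y = Q.flipU * Q.oppDeltahat y * Q.flipU := by
  have hflip : Q.flipU * Q.tensorOp 1 y * Q.flipU = Q.tensorOp y 1 := by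
    rw [flipU_mul_tensorOp, mul_assoc, flipU_mul_flipU, mul_one]
  simp only [Deltahat, What, oppDeltahat, ← hflip, star_mul, star_flipU, star_star, mul_assoc]

theorem star_oppDeltahat (y : B H) : star (Q.oppDeltahat y) = Q.oppDeltahat (star y) := by
  simp only [oppDeltahat, star_mul, star_tensorOp, star_one, star_star, mul_assoc]

theorem oppDeltahat_mul (y z : B H) :
    Q.oppDeltahat (y * z) = Q.oppDeltahat y * Q.oppDeltahat z := by
  calc Q.oppDeltahat (y * z)
      = Q.W * Q.tensorOp y 1 * (star Q.W * Q.W) * Q.tensorOp z 1 * star Q.W := by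
        rw [Q.W_unitary_l, mul_one, mul_assoc Q.W, tensorOp_mul, one_mul, oppDeltahat]
    _ = _ := by simp only [oppDeltahat, mul_assoc]

theorem inner_Deltahat_tmul (y : B H) (a b c d : H) :
    ⟪Q.tmul a b, Q.Deltahat y (Q.tmul c d)⟫ =
      ⟪Q.tmul b a, Q.oppDeltahat y (Q.tmul d c)⟫ := by
  rw [Deltahat_eq_flipU_conj, mul_apply_eq_comp, mul_apply_eq_comp, ← star_apply_inner,
    star_flipU, Q.flipU_apply, Q.flipU_apply]

theorem sliceL_Deltahat (y : B H) (c d : H) :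
    Q.sliceL (vecFunctional H c d) (Q.Deltahat y) =
      Q.sliceR (vecFunctional H c d) (Q.oppDeltahat y) :=
  ext_inner_apply fun p q => by
    rw [inner_sliceL_vecFunctional, inner_sliceR_vecFunctional, inner_Deltahat_tmul]

theorem sliceR_Deltahat (y : B H) (c d : H) :
    Q.sliceR (vecFunctional H c d) (Q.Deltahat y) =
      Q.sliceL (vecFunctional H c d) (Q.oppDeltahat y) :=
  ext_inner_apply fun p q => by
    rw [inner_sliceL_vecFunctional, inner_sliceR_vecFunctional, inner_Deltahat_tmul]

theorem hasSum_funcTensor {ω ρ : B H →ₗ[ℂ] ℂ} {ξ η ξ' η' : ℕ → H}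
    (hξ : Summable fun n => ‖ξ n‖ ^ 2) (hη : Summable fun n => ‖η n‖ ^ 2)
    (hω : ∀ x : B H, HasSum (fun n => ⟪η n, x (ξ n)⟫) (ω x))
    (hξ' : Summable fun n => ‖ξ' n‖ ^ 2) (hη' : Summable fun n => ‖η' n‖ ^ 2)
    (hρ : ∀ x : B H, HasSum (fun n => ⟪η' n, x (ξ' n)⟫) (ρ x)) (X : B H2) :
    HasSum (fun p : ℕ × ℕ => ⟪Q.tmul (η p.1) (η' p.2), X (Q.tmul (ξ p.1) (ξ' p.2))⟫)
      (Q.funcTensor ω ρ X) := by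
  have hsum {α β : ℕ → H} (hα : Summable fun n => ‖α n‖ ^ 2) (hβ : Summable fun n => ‖β n‖ ^ 2) :
      Summable fun p : ℕ × ℕ => ‖Q.tmul (α p.1) (β p.2)‖ ^ 2 := by
    simp only [norm_tmul, mul_pow]
    exact Summable.mul_of_nonneg (f := fun n => ‖α n‖ ^ 2) (g := fun n => ‖β n‖ ^ 2) hα hβ
      (fun _ => by positivity) fun _ => by positivity
  have hF : Q.funcTensor ω ρ = sumFunctional (fun p : ℕ × ℕ => Q.tmul (ξ p.1) (ξ' p.2))
      (fun p => Q.tmul (η p.1) (η' p.2)) (hsum hξ hξ') (hsum hη hη') := by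
    refine Q.ext_tensorOp (Q.funcTensor_normal ω ρ ⟨ξ, η, hξ, hη, hω⟩ ⟨ξ', η', hξ', hη', hρ⟩)
      (isNormalFunctional_sumFunctional _ _ _ _) fun x y => ?_
    have h := hasSum_sumFunctional _ _ (hsum hξ hξ') (hsum hη hη') (Q.tensorOp x y)
    rw [Q.funcTensor_elem]
    simp only [Q.tensorOp_apply, Q.tmul_inner] at h
    have hiter : HasSum (fun n => ⟪η n, x (ξ n)⟫ * ρ y) _ :=
      HasSum.prod_fiberwise h fun n => (hρ y).mul_left ⟪η n, x (ξ n)⟫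
    exact ((hω x).mul_right (ρ y)).unique hiter
  rw [hF]
  exact hasSum_sumFunctional _ _ (hsum hξ hξ') (hsum hη hη') X

end LCQG

namespace DiscreteKacQG

open LCQG

variable (Q : DiscreteKacQG H H2)

theorem oppDeltahat_mem {y : B H} (hy : y ∈ Q.Mhat) : Q.oppDeltahat y ∈ Q.dualTensor :=
  mem_dualTensor_of_slices
    (fun c d => by
      rw [← sliceR_Deltahat]
      exact Q.slice_Deltahat_memR _ y hy)
    (fun c d => by
      rw [← sliceL_Deltahat]
      exact Q.slice_Deltahat_memL _ y hy)

/-- The cyclic trace vector `Λ_{φ̂}(1)`, which implements the dual Haar state on `L∞(𝔾̂)`. -/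
def traceVector : H := Q.Lam 1

theorem Lam_eq_apply_traceVector {a : B H} (ha : a ∈ Q.Mhat) : Q.Lam a = a Q.traceVector := by
  rw [traceVector, Q.Lam_act a ha 1 (one_mem _), mul_one]

theorem inner_apply_traceVector {a b : B H} (ha : a ∈ Q.Mhat) (hb : b ∈ Q.Mhat) :
    ⟪a Q.traceVector, b Q.traceVector⟫ = Q.phihat (star a * b) := by
  rw [← Q.Lam_eq_apply_traceVector ha, ← Q.Lam_eq_apply_traceVector hb, Q.Lam_inner a ha b hb]

theorem phihat_eq_inner {a : B H} (ha : a ∈ Q.Mhat) :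
    Q.phihat a = ⟪Q.traceVector, a Q.traceVector⟫ := by
  simpa using (Q.inner_apply_traceVector (one_mem _) ha).symm

theorem norm_traceVector : ‖Q.traceVector‖ = 1 := by
  have h := Q.phihat_eq_inner (one_mem _)
  rw [Q.phihat_state.1, one_apply_eq_self, inner_self_eq_ofReal_norm_sq] at h
  exact (pow_eq_one_iff_of_nonneg (norm_nonneg _) two_ne_zero).1 (by exact_mod_cast h.symm)

theorem inner_oppDeltahat_left {y : B H} (hy : y ∈ Q.Mhat) (c d : H) :
    ⟪Q.tmul c Q.traceVector, Q.oppDeltahat y (Q.tmul d Q.traceVector)⟫ =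
      ⟪c, d⟫ * Q.phihat y := by
  rw [← inner_sliceL_vecFunctional,
    ← Q.phihat_eq_inner (sliceL_mem_of_mem_dualTensor (Q.oppDeltahat_mem hy) d c),
    ← sliceR_Deltahat, Q.phihat_right_inv y hy _ (isNormalFunctional_vecFunctional d c)]
  rfl

theorem inner_oppDeltahat_right {y : B H} (hy : y ∈ Q.Mhat) (c d : H) :
    ⟪Q.tmul Q.traceVector c, Q.oppDeltahat y (Q.tmul Q.traceVector d)⟫ =
      ⟪c, d⟫ * Q.phihat y := by
  rw [← inner_sliceR_vecFunctional,
    ← Q.phihat_eq_inner (sliceR_mem_of_mem_dualTensor (Q.oppDeltahat_mem hy) d c),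
    ← sliceL_Deltahat, Q.phihat_left_inv y hy _ (isNormalFunctional_vecFunctional d c)]
  rfl

theorem eq_smul_one_of_mem {x : B H} (hM : x ∈ Q.M) (hMhat : x ∈ Q.Mhat) :
    x = Q.phihat x • (1 : B H) := by
  have hDelta : star Q.W * Q.tensorOp 1 x * Q.W = Q.tensorOp x 1 := by
    rw [Q.Delta_V x hM, (Q.V_mem x hMhat 1 (one_mem _)).eq, mul_assoc, Q.V_unitary_r, mul_one]
  have hDeltahat : Q.oppDeltahat x = Q.tensorOp 1 x := by
    calc Q.oppDeltahat x = Q.W * star Q.W * Q.tensorOp 1 x * (Q.W * star Q.W) := by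
          simp only [oppDeltahat, ← hDelta, mul_assoc]
      _ = _ := by rw [Q.W_unitary_r, one_mul, mul_one]
  refine ext_inner_apply fun p q => ?_
  have h := Q.inner_oppDeltahat_right hMhat p q
  rw [hDeltahat, Q.tensorOp_apply, Q.tmul_inner, one_apply_eq_self,
    inner_self_eq_ofReal_norm_sq, norm_traceVector] at h
  simpa [inner_smul_right, mul_comm] using h

/-- The vector `Λ_{φ̂}(1) ⊗ Λ_{φ̂}(1)`, which implements `φ̂ ⊗ φ̂`. -/
def tensorTraceVector : H2 := Q.tmul Q.traceVector Q.traceVector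

theorem funcTensor_phihat_eq_inner {Y : B H2} (hY : Y ∈ Q.dualTensor) :
    Q.funcTensor Q.phihat Q.phihat Y = ⟪Q.tensorTraceVector, Y Q.tensorTraceVector⟫ := by
  obtain ⟨ξ, η, hξ, hη, hs⟩ := Q.phihat_normal
  have hfiber : HasSum
      (fun n => ⟪η n, Q.sliceR (vecFunctional H Q.traceVector Q.traceVector) Y (ξ n)⟫)
      (Q.funcTensor Q.phihat Q.phihat Y) := by
    refine (Q.hasSum_funcTensor hξ hη hs hξ hη hs Y).prod_fiberwise fun n => ?_
    have h := hs (Q.sliceL (vecFunctional H (ξ n) (η n)) Y)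
    rw [Q.phihat_eq_inner (sliceL_mem_of_mem_dualTensor hY _ _)] at h
    simpa only [inner_sliceL_vecFunctional, inner_sliceR_vecFunctional] using h
  rw [hfiber.unique (hs _), Q.phihat_eq_inner (sliceR_mem_of_mem_dualTensor hY _ _),
    inner_sliceR_vecFunctional, tensorTraceVector]

variable {Q}

theorem tensorOp_mem_stateCentralizer {a b : B H} (ha : a ∈ Q.Mhat) (hb : b ∈ Q.Mhat) :
    Q.tensorOp a b ∈ stateCentralizer Q.dualTensor Q.tensorTraceVector := by
  have hfst : Q.tensorOp a 1 ∈ stateCentralizer Q.dualTensor Q.tensorTraceVector := by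
    refine ⟨tensorOp_mem_dualTensor ha (one_mem _), fun Y hY => ?_⟩
    have hs := sliceR_mem_of_mem_dualTensor hY Q.traceVector Q.traceVector
    rw [tensorTraceVector, ← inner_sliceR_vecFunctional, ← inner_sliceR_vecFunctional,
      sliceR_tensorOp_mul, sliceR_mul_tensorOp, ← Q.phihat_eq_inner (mul_mem ha hs),
      ← Q.phihat_eq_inner (mul_mem hs ha), Q.phihat_tracial _ ha _ hs]
  have hsnd : Q.tensorOp 1 b ∈ stateCentralizer Q.dualTensor Q.tensorTraceVector := by
    refine ⟨tensorOp_mem_dualTensor (one_mem _) hb, fun Y hY => ?_⟩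
    have hs := sliceL_mem_of_mem_dualTensor hY Q.traceVector Q.traceVector
    rw [tensorTraceVector, ← inner_sliceL_vecFunctional, ← inner_sliceL_vecFunctional,
      sliceL_tensorOp_mul, sliceL_mul_tensorOp, ← Q.phihat_eq_inner (mul_mem hb hs),
      ← Q.phihat_eq_inner (mul_mem hs hb), Q.phihat_tracial _ hb _ hs]
  simpa only [tensorOp_mul, mul_one, one_mul] using mul_mem hfst hsnd

theorem tensorOp_apply_mem_cyclicSubspace {e : B H}
    (he : ∀ u, e u ∈ cyclicSubspace Q.Mhat.toStarSubalgebra Q.traceVector) (w : H2) :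
    Q.tensorOp e e w ∈
      cyclicSubspace (stateCentralizer Q.dualTensor Q.tensorTraceVector) Q.tensorTraceVector := by
  set S := cyclicSubspace (stateCentralizer Q.dualTensor Q.tensorTraceVector) Q.tensorTraceVector
  have hS : IsClosed (S : Set H2) := isClosed_cyclicSubspace _ _
  have htmul p q : Q.tmul (e p) (e q) ∈ S :=
    map_mem_of_mem_cyclicSubspace (he p) hS (Q.ketR (e q)) fun a ha =>
      map_mem_of_mem_cyclicSubspace (he q) hS (Q.ketL (a Q.traceVector)) fun b hb => by
        rw [ketL_apply, ← Q.tensorOp_apply]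
        exact apply_mem_cyclicSubspace (tensorOp_mem_stateCentralizer ha hb) _
  refine (hS.preimage (Q.tensorOp e e).continuous).closure_subset_iff.2 ?_ (Q.dense_span_tmul w)
  change Submodule.span ℂ _ ≤ S.comap (Q.tensorOp e e).toLinearMap
  rw [Submodule.span_le]
  rintro _ ⟨p, q, rfl⟩
  simpa [Q.tensorOp_apply] using htmul p q

theorem mem_stateCentralizer_of_mem_dualTensor {Y : B H2} (hY : Y ∈ Q.dualTensor) :
    Y ∈ stateCentralizer Q.dualTensor Q.tensorTraceVector := by
  refine mem_stateCentralizer_of_cyclic (fun Z hZ => ?_) hY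
  obtain ⟨e, he, hfix, hrange⟩ :=
    exists_commutant_projection_cyclicSubspace Q.Mhat Q.traceVector
  have hcomm : Commute Z (Q.tensorOp e e) := by
    have h := mem_dualTensor_iff.1 hZ e he
    simpa only [tensorOp_mul, mul_one, one_mul] using h.1.mul_right h.2
  have happly : Q.tensorOp e e Q.tensorTraceVector = Q.tensorTraceVector := by
    rw [tensorTraceVector, Q.tensorOp_apply, hfix]
  rw [← happly, ← mul_apply_eq_comp, hcomm.eq, happly]
  exact tensorOp_apply_mem_cyclicSubspace hrange _

theorem inner_dualTensor_mul_comm {Y Z : B H2} (hY : Y ∈ Q.dualTensor) (hZ : Z ∈ Q.dualTensor) :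
    ⟪Q.tensorTraceVector, (Y * Z) Q.tensorTraceVector⟫ =
      ⟪Q.tensorTraceVector, (Z * Y) Q.tensorTraceVector⟫ :=
  (mem_stateCentralizer_of_mem_dualTensor hY).2 Z hZ

theorem inner_oppDeltahat_mul_tensorOp_left {a b z : B H} (ha : a ∈ Q.Mhat) (hb : b ∈ Q.Mhat)
    (hz : z ∈ Q.Mhat) :
    ⟪Q.tensorTraceVector,
        (Q.oppDeltahat b * Q.tensorOp z 1 * Q.oppDeltahat a) Q.tensorTraceVector⟫ =
      Q.phihat z * Q.phihat (a * b) := by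
  have hz' := tensorOp_mem_dualTensor hz (one_mem Q.Mhat)
  rw [inner_dualTensor_mul_comm (mul_mem (Q.oppDeltahat_mem hb) hz') (Q.oppDeltahat_mem ha),
    ← mul_assoc, ← oppDeltahat_mul,
    inner_dualTensor_mul_comm (Q.oppDeltahat_mem (mul_mem ha hb)) hz', mul_apply_eq_comp,
    ← star_apply_inner, star_tensorOp, tensorTraceVector, Q.tensorOp_apply, star_one,
    one_apply_eq_self, Q.inner_oppDeltahat_left (mul_mem ha hb), star_apply_inner,
    Q.phihat_eq_inner hz]

theorem inner_oppDeltahat_mul_tensorOp_right {a b z : B H} (ha : a ∈ Q.Mhat) (hb : b ∈ Q.Mhat)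
    (hz : z ∈ Q.Mhat) :
    ⟪Q.tensorTraceVector,
        (Q.oppDeltahat b * Q.tensorOp 1 z * Q.oppDeltahat a) Q.tensorTraceVector⟫ =
      Q.phihat z * Q.phihat (a * b) := by
  have hz' := tensorOp_mem_dualTensor (one_mem Q.Mhat) hz
  rw [inner_dualTensor_mul_comm (mul_mem (Q.oppDeltahat_mem hb) hz') (Q.oppDeltahat_mem ha),
    ← mul_assoc, ← oppDeltahat_mul,
    inner_dualTensor_mul_comm (Q.oppDeltahat_mem (mul_mem ha hb)) hz', mul_apply_eq_comp,
    ← star_apply_inner, star_tensorOp, tensorTraceVector, Q.tensorOp_apply, star_one,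
    one_apply_eq_self, Q.inner_oppDeltahat_right (mul_mem ha hb), star_apply_inner,
    Q.phihat_eq_inner hz]

theorem Deltahat_mem_dualTensor {y : B H} (hy : y ∈ Q.Mhat) : Q.Deltahat y ∈ Q.dualTensor :=
  mem_dualTensor_of_slices (fun _ _ => Q.slice_Deltahat_memL _ y hy)
    fun _ _ => Q.slice_Deltahat_memR _ y hy

theorem funcTensor_phihat_Deltahat {a b z : B H} (ha : a ∈ Q.Mhat) (hb : b ∈ Q.Mhat)
    (hz : z ∈ Q.Mhat) :
    Q.funcTensor Q.phihat Q.phihat (Q.Deltahat b * Q.tensorOp z 1 * Q.Deltahat a) =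
      Q.phihat z * Q.phihat (a * b) := by
  have hflip : Q.Deltahat b * Q.tensorOp z 1 * Q.Deltahat a =
      Q.flipU * (Q.oppDeltahat b * Q.tensorOp 1 z * Q.oppDeltahat a) * Q.flipU := by
    calc Q.Deltahat b * Q.tensorOp z 1 * Q.Deltahat a
        = Q.flipU * Q.oppDeltahat b * (Q.flipU * Q.tensorOp z 1) *
            (Q.flipU * Q.oppDeltahat a * Q.flipU) := by
          simp only [Deltahat_eq_flipU_conj, mul_assoc]
      _ = Q.flipU * Q.oppDeltahat b * Q.tensorOp 1 z * (Q.flipU * Q.flipU) *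
            Q.oppDeltahat a * Q.flipU := by
          simp only [flipU_mul_tensorOp, mul_assoc]
      _ = _ := by simp only [flipU_mul_flipU, mul_one, mul_assoc]
  rw [Q.funcTensor_phihat_eq_inner (mul_mem (mul_mem (Deltahat_mem_dualTensor hb)
      (tensorOp_mem_dualTensor hz (one_mem _))) (Deltahat_mem_dualTensor ha)),
    ← inner_oppDeltahat_mul_tensorOp_right ha hb hz, hflip, mul_apply_eq_comp, mul_apply_eq_comp,
    ← star_apply_inner, star_flipU, tensorTraceVector, Q.flipU_apply]

end DiscreteKacQG

namespace LCQG

variable (Q : LCQG H H2) {ι : Type*} (e : HilbertBasis ι ℂ H)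

section TripleTensor

theorem ext_tmul_basis {F : Type*} [NormedAddCommGroup F] [NormedSpace ℂ F] {X Y : H2 →L[ℂ] F}
    (h : ∀ i j, X (Q.tmul (e i) (e j)) = Y (Q.tmul (e i) (e j))) : X = Y :=
  ContinuousLinearMap.ext_on
      (Submodule.dense_iff_topologicalClosure_eq_top.2 (Q.tensorBasis e).dense_span) <| by
    rintro _ ⟨⟨i, j⟩, rfl⟩
    simpa only [tensorBasis_apply] using h i j

theorem memℓp_tmul_adjoint_ketL (v : H2) (b : H) :
    Memℓp (fun i => Q.tmul (adjoint (Q.ketL (e i)) v) b) 2 := by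
  have h := (Q.hasSum_inner_adjoint_ketL e v v).summable.norm.mul_right (‖b‖ ^ 2)
  refine memℓp_gen (h.congr fun i => ?_)
  rw [inner_self_eq_ofReal_norm_sq, norm_tmul, ENNReal.toReal_ofNat, Real.rpow_two, mul_pow,
    Complex.norm_real, norm_pow, norm_norm]

/-- The threefold tensor product `H ⊗ H ⊗ H`, modelled as the Hilbert sum of the subspaces
`eᵢ ⊗ (H ⊗ H)` determined by a Hilbert basis of the first leg. -/
abbrev TripleTensor (ι H2 : Type*) [NormedAddCommGroup H2] : Type _ := lp (fun _ : ι => H2) 2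

/-- The embedding `v ↦ eᵢ ⊗ v` of legs two and three into the threefold tensor product. -/
def firstLegEmb [DecidableEq ι] (i : ι) : H2 →ₗᵢ[ℂ] TripleTensor ι H2 :=
  (lp.lsingle (𝕜 := ℂ) (E := fun _ : ι => H2) 2 i).isometryOfInner fun v w => by
    have h := lp.inner_single_left (𝕜 := ℂ) i v (lp.single (E := fun _ : ι => H2) 2 i w)
    rwa [lp.single_apply_self] at h

omit [CompleteSpace H2] in
theorem firstLegEmb_apply [DecidableEq ι] (i : ι) (v : H2) :
    firstLegEmb i v = lp.single (E := fun _ : ι => H2) 2 i v := rfl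

/-- The embedding `v ↦ v ⊗ eₖ` of legs one and two into the threefold tensor product. -/
def thirdLegEmb (k : ι) : H2 →ₗᵢ[ℂ] TripleTensor ι H2 :=
  LinearMap.isometryOfInner
    { toFun v := ⟨fun i => Q.tmul (adjoint (Q.ketL (e i)) v) (e k),
        Q.memℓp_tmul_adjoint_ketL e v (e k)⟩
      map_add' v w := lp.ext <| funext fun i => by
        simp only [map_add, LinearMap.add_apply]
        rfl
      map_smul' c v := lp.ext <| funext fun i => by
        simp only [map_smul, LinearMap.smul_apply]
        rfl }
    fun v w => by
      refine (lp.hasSum_inner _ _).unique ?_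
      simpa [Q.tmul_inner, e.orthonormal.1 k] using
        Q.hasSum_inner_adjoint_ketL e v w

theorem thirdLegEmb_apply (k i : ι) (v : H2) :
    Q.thirdLegEmb e k v i = Q.tmul (adjoint (Q.ketL (e i)) v) (e k) := rfl

variable [DecidableEq ι]

omit [CompleteSpace H2] in
theorem inner_firstLegEmb_left (i : ι) (v : H2) (w : TripleTensor ι H2) :
    ⟪firstLegEmb i v, w⟫ = ⟪v, w i⟫ :=
  lp.inner_single_left (𝕜 := ℂ) (G := fun _ : ι => H2) i v w

theorem thirdLegEmb_tmul (i k : ι) (a : H) :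
    Q.thirdLegEmb e k (Q.tmul (e i) a) = firstLegEmb i (Q.tmul a (e k)) := by
  have hket (j : ι) : adjoint (Q.ketL (e j)) (Q.tmul (e i) a) = Pi.single (M := fun _ => H) i a j :=
    ext_inner_left ℂ fun p => by
      rw [adjoint_inner_right, ketL_apply, Q.tmul_inner, orthonormal_iff_ite.1 e.orthonormal]
      rcases eq_or_ne j i with rfl | hij <;> simp [*]
  refine lp.ext <| funext fun j => ?_
  rw [thirdLegEmb_apply, hket, firstLegEmb_apply, lp.single_apply]
  exact Pi.apply_single (fun _ b => Q.tmul b (e k)) (fun _ => by simp) i a j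

variable (ι H2) in
theorem isHilbertSum_firstLegEmb :
    IsHilbertSum ℂ (fun _ : ι => H2) (firstLegEmb (ι := ι)) := by
  refine isHilbertSum_of_inner (fun i j hij v w => ?_) fun w hw => ?_
  · rw [inner_firstLegEmb_left]
    rw [firstLegEmb_apply, lp.single_apply, Pi.single_eq_of_ne hij, inner_zero_right]
  · refine lp.ext <| funext fun i => ext_inner_left ℂ fun v => ?_
    rw [← inner_firstLegEmb_left, hw]
    exact (inner_zero_right v).symm

omit [DecidableEq ι] in
theorem isHilbertSum_thirdLegEmb :
    IsHilbertSum ℂ (fun _ : ι => H2) (Q.thirdLegEmb e) := by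
  classical
  refine isHilbertSum_of_inner (fun k l hkl v w => ?_) fun w hw => ?_
  · have h := lp.hasSum_inner (𝕜 := ℂ) (Q.thirdLegEmb e k v) (Q.thirdLegEmb e l w)
    simp only [thirdLegEmb_apply, Q.tmul_inner, e.orthonormal.2 hkl, mul_zero] at h
    exact h.unique hasSum_zero
  · refine lp.ext <| funext fun i => eq_of_inner_basis_eq (Q.tensorBasis e) fun p => ?_
    rw [tensorBasis_apply, ← inner_firstLegEmb_left, ← thirdLegEmb_tmul, hw]
    exact (inner_zero_right _).symm

variable (ι) in
/-- The leg-numbered operator `X₂₃ = 1 ⊗ X` on `H ⊗ H ⊗ H`. -/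
def leg23 : B H2 →⋆ₐ[ℂ] B (TripleTensor ι H2) :=
  amplify (isHilbertSum_firstLegEmb H2 ι)

/-- The leg-numbered operator `X₁₂ = X ⊗ 1` on `H ⊗ H ⊗ H`. -/
def leg12 : B H2 →⋆ₐ[ℂ] B (TripleTensor ι H2) :=
  amplify (Q.isHilbertSum_thirdLegEmb e)

theorem block_firstLegEmb_leg12 (X : B H2) (i j : ι) :
    block firstLegEmb (Q.leg12 e X) i j =
      Q.tensorOp (Q.sliceL (vecFunctional H (e j) (e i)) X) 1 := by
  refine Q.ext_tmul_basis e fun l k => ext_inner_left ℂ fun v => ?_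
  rw [inner_block, ← thirdLegEmb_tmul, leg12, amplify_apply, inner_firstLegEmb_left,
    thirdLegEmb_apply, adjoint_ketL_apply, Q.tensorOp_apply, one_apply_eq_self]

theorem block_thirdLegEmb_leg23 (X : B H2) (k l : ι) :
    block (Q.thirdLegEmb e) (leg23 ι X) k l =
      Q.tensorOp 1 (Q.sliceR (vecFunctional H (e l) (e k)) X) := by
  refine Q.ext_tmul_basis e fun i j => ext_inner_left ℂ fun v => ?_
  rw [inner_block, thirdLegEmb_tmul, leg23, amplify_apply, ← inner_conj_symm,
    inner_firstLegEmb_left, inner_conj_symm, thirdLegEmb_apply, ← inner_sliceR_vecFunctional,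
    adjoint_inner_left, ketL_apply, Q.tensorOp_apply, one_apply_eq_self]

theorem leg23_tensorOp_one (y : B H) :
    leg23 ι (Q.tensorOp y 1) = Q.leg12 e (Q.tensorOp 1 y) := by
  refine ext_hilbertSum (Q.isHilbertSum_thirdLegEmb e) fun k => ?_
  have h : leg23 ι (Q.tensorOp y 1) ∘L (Q.thirdLegEmb e k).toContinuousLinearMap =
      Q.leg12 e (Q.tensorOp 1 y) ∘L (Q.thirdLegEmb e k).toContinuousLinearMap :=
    Q.ext_tmul_basis e fun i j => by
      simp only [ContinuousLinearMap.comp_apply, LinearIsometry.coe_toContinuousLinearMap]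
      rw [thirdLegEmb_tmul, leg23, amplify_apply, ← thirdLegEmb_tmul, leg12, amplify_apply]
      simp only [Q.tensorOp_apply, one_apply_eq_self, thirdLegEmb_tmul]
  exact DFunLike.congr_fun h

end TripleTensor

section Pentagon

variable [DecidableEq ι]

theorem sliceR_W_mem (c d : H) : Q.sliceR (vecFunctional H c d) Q.W ∈ Q.M :=
  mem_of_forall_commute fun a ha => Q.commute_sliceR (Q.W_mem a ha 1 (one_mem _)) c d

theorem commute_star_W {a b : B H} (ha : a ∈ Q.M.commutant) (hb : b ∈ Q.Mhat.commutant) :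
    Commute (star Q.W) (Q.tensorOp a b) := by
  simpa only [star_tensorOp, star_star] using
    (Q.W_mem (star a) (star_mem ha) (star b) (star_mem hb)).star_star

theorem W_mem_unitary : Q.W ∈ unitary (B H2) := ⟨Q.W_unitary_l, Q.W_unitary_r⟩

/-- The operator `W₁₂* W₂₃ W₁₂ W₂₃*` on `H ⊗ H ⊗ H`. The pentagon equation
`W₂₃ W₁₂ = W₁₂ W₁₃ W₂₃` says that it is `W₁₃`; here it is only needed that it commutes with
the operators on the second leg. -/
def pentagonOp : B (TripleTensor ι H2) :=
  star (Q.leg12 e Q.W) * leg23 ι Q.W * Q.leg12 e Q.W * star (leg23 ι Q.W)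

theorem pentagonOp_mem_unitary : Q.pentagonOp e ∈ unitary (B (TripleTensor ι H2)) := by
  have h12 : Q.leg12 e Q.W ∈ unitary _ := Unitary.map_mem (Q.leg12 e) Q.W_mem_unitary
  have h23 : leg23 ι Q.W ∈ unitary _ := Unitary.map_mem (leg23 ι) Q.W_mem_unitary
  exact mul_mem (mul_mem (mul_mem (Unitary.star_mem h12) h23) h12) (Unitary.star_mem h23)

theorem leg12_W_mul_pentagonOp :
    Q.leg12 e Q.W * Q.pentagonOp e = leg23 ι Q.W * Q.leg12 e Q.W * star (leg23 ι Q.W) := by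
  rw [pentagonOp, mul_assoc, mul_assoc, ← mul_assoc, ← map_star, ← map_mul, Q.W_unitary_r,
    map_one, one_mul, mul_assoc]

theorem commute_pentagonOp_of_mem_commutant_M {a : B H} (ha : a ∈ Q.M.commutant) :
    Commute (Q.pentagonOp e) (Q.leg12 e (Q.tensorOp 1 a)) := by
  refine .mul_left ((commute_amplify_iff _).2 fun k l => ?_) ?_
  · have hblock : block (Q.thirdLegEmb e)
        (star (Q.leg12 e Q.W) * leg23 ι Q.W * Q.leg12 e Q.W) k l =
        Q.Delta (Q.sliceR (vecFunctional H (e l) (e k)) Q.W) := by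
      rw [← map_star, leg12, block_mul_amplify, block_amplify_mul, block_thirdLegEmb_leg23, Delta]
    rw [hblock]
    exact Q.Delta_mem _ (Q.sliceR_W_mem _ _) 1 (one_mem _) a ha
  · rw [← leg23_tensorOp_one, ← map_star]
    exact (Q.commute_star_W ha (one_mem _)).map (leg23 ι)

end Pentagon

end LCQG

namespace DiscreteKacQG

open LCQG

variable (Q : DiscreteKacQG H H2)

section Pentagon

variable {ι : Type*} [DecidableEq ι] (e : HilbertBasis ι ℂ H)

theorem block_firstLegEmb_leg12_mul_pentagonOp (i j : ι) :
    block firstLegEmb (Q.leg12 e Q.W * Q.pentagonOp e) i j =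
      Q.oppDeltahat (Q.sliceL (vecFunctional H (e j) (e i)) Q.W) := by
  rw [leg12_W_mul_pentagonOp, ← map_star, leg23, block_mul_amplify, block_amplify_mul,
    block_firstLegEmb_leg12, oppDeltahat]

theorem commute_pentagonOp_of_mem_commutant_Mhat {a : B H} (ha : a ∈ Q.Mhat.commutant) :
    Commute (Q.pentagonOp e) (Q.leg12 e (Q.tensorOp 1 a)) := by
  have h12 : star (Q.leg12 e Q.W) * Q.leg12 e Q.W = 1 := by
    rw [← map_star, ← map_mul, Q.W_unitary_l, map_one]
  rw [← one_mul (Q.pentagonOp e), ← h12, mul_assoc]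
  refine .mul_left ?_ ?_
  · rw [← map_star]
    exact (Q.commute_star_W (one_mem _) ha).map (Q.leg12 e)
  · rw [← leg23_tensorOp_one]
    refine (commute_amplify_iff _).2 fun i j => ?_
    rw [block_firstLegEmb_leg12_mul_pentagonOp]
    exact (mem_dualTensor_iff.1 (Q.oppDeltahat_mem (Q.sliceL_W_mem _ _)) a ha).1

theorem commute_pentagonOp (y : B H) :
    Commute (Q.pentagonOp e) (Q.leg12 e (Q.tensorOp 1 y)) := by
  refine (commute_amplify_iff _).2 fun k l => Q.commute_tensorOp_of_commute_sliceL fun c d => ?_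
  have hslice {N : VonNeumannAlgebra H}
      (h : ∀ a ∈ N.commutant, Commute (Q.pentagonOp e) (Q.leg12 e (Q.tensorOp 1 a))) :
      Q.sliceL (vecFunctional H c d) (block (Q.thirdLegEmb e) (Q.pentagonOp e) k l) ∈ N :=
    mem_of_forall_commute fun a ha =>
      Q.commute_sliceL ((commute_amplify_iff _).1 (h a ha) k l) c d
  rw [Q.eq_smul_one_of_mem (hslice fun _ => Q.commute_pentagonOp_of_mem_commutant_M e)
    (hslice fun _ => Q.commute_pentagonOp_of_mem_commutant_Mhat e)]
  exact (Commute.one_left y).smul_left _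

theorem leg12_W_conj_tensorOp (y : B H) :
    Q.leg12 e Q.W * Q.pentagonOp e * leg23 ι (Q.tensorOp y 1) *
        star (Q.leg12 e Q.W * Q.pentagonOp e) =
      Q.leg12 e (Q.W * Q.tensorOp 1 y * star Q.W) := by
  rw [Q.leg23_tensorOp_one e]
  calc _ = Q.leg12 e Q.W * (Q.pentagonOp e * Q.leg12 e (Q.tensorOp 1 y)) *
        star (Q.pentagonOp e) * star (Q.leg12 e Q.W) := by simp only [star_mul, mul_assoc]
    _ = Q.leg12 e Q.W * Q.leg12 e (Q.tensorOp 1 y) * (Q.pentagonOp e * star (Q.pentagonOp e)) *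
        star (Q.leg12 e Q.W) := by
      rw [(Q.commute_pentagonOp e y).eq]
      simp only [mul_assoc]
    _ = _ := by
      rw [Unitary.mul_star_self_of_mem (Q.pentagonOp_mem_unitary e), mul_one, ← map_star,
        ← map_mul, ← map_mul]

omit [DecidableEq ι] in
theorem hasSum_phihat_mul_phihat_slices {y : B H} (hy : y ∈ Q.Mhat) (i j : ι) :
    HasSum (fun k => Q.phihat y *
        Q.phihat (star (Q.sliceL (vecFunctional H (e k) (e j)) Q.W) *
          Q.sliceL (vecFunctional H (e k) (e i)) Q.W))
      ⟪star Q.W (Q.tmul (e i) Q.traceVector),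
        Q.tensorOp 1 y (star Q.W (Q.tmul (e j) Q.traceVector))⟫ := by
  classical
  have h := hasSum_inner_star_block (isHilbertSum_firstLegEmb H2 ι)
    (Q.leg12 e Q.W * Q.pentagonOp e) (Q.tensorOp y 1) i j Q.tensorTraceVector Q.tensorTraceVector
  change HasSum _ ⟪_, (_ * leg23 ι _ * _) _⟫ at h
  have hterm {b a : B H} (hb : b ∈ Q.Mhat) (ha : a ∈ Q.Mhat) :
      ⟪star (Q.oppDeltahat b) Q.tensorTraceVector,
        Q.tensorOp y 1 (star (Q.oppDeltahat a) Q.tensorTraceVector)⟫ =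
      Q.phihat y * Q.phihat (star a * b) := by
    rw [star_apply_inner, star_oppDeltahat, ← mul_apply_eq_comp, ← mul_apply_eq_comp,
      inner_oppDeltahat_mul_tensorOp_left (star_mem ha) hb hy]
  simp only [block_firstLegEmb_leg12_mul_pentagonOp, hterm (Q.sliceL_W_mem _ _)
    (Q.sliceL_W_mem _ _)] at h
  convert h using 1
  rw [leg12_W_conj_tensorOp, ← inner_block, block_firstLegEmb_leg12, tensorTraceVector,
    Q.tensorOp_apply, Q.tmul_inner, one_apply_eq_self, inner_self_eq_ofReal_norm_sq,
    norm_traceVector, inner_sliceL_vecFunctional, mul_apply_eq_comp, mul_apply_eq_comp,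
    star_apply_inner]
  simp

end Pentagon

theorem inner_star_W_tmul_traceVector {y : B H} (hy : y ∈ Q.Mhat) (c d : H) :
    ⟪star Q.W (Q.tmul c Q.traceVector), Q.tensorOp 1 y (star Q.W (Q.tmul d Q.traceVector))⟫ =
      ⟪c, d⟫ * Q.phihat y := by
  obtain ⟨s, e, -⟩ := exists_hilbertBasis ℂ H
  have hbasis i j : ⟪star Q.W (Q.tmul (e i) Q.traceVector),
      Q.tensorOp 1 y (star Q.W (Q.tmul (e j) Q.traceVector))⟫ = ⟪e i, e j⟫ * Q.phihat y := by
    have hone := Q.hasSum_phihat_mul_phihat_slices e (one_mem Q.Mhat) i j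
    rw [tensorOp_one_one, one_apply_eq_self, star_apply_inner, ← mul_apply_eq_comp, Q.W_unitary_r,
      one_apply_eq_self, Q.tmul_inner, inner_self_eq_ofReal_norm_sq, norm_traceVector,
      Q.phihat_state.1] at hone
    simp only [one_mul, one_pow, Complex.ofReal_one, mul_one] at hone
    rw [(Q.hasSum_phihat_mul_phihat_slices e hy i j).unique (hone.mul_left (Q.phihat y)), mul_comm]
  have hslice : Q.sliceR (vecFunctional H Q.traceVector Q.traceVector)
      (Q.W * Q.tensorOp 1 y * star Q.W) = Q.phihat y • (1 : B H) :=
    ContinuousLinearMap.ext_on (Submodule.dense_iff_topologicalClosure_eq_top.2 e.dense_span) <| by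
      rintro _ ⟨j, rfl⟩
      refine eq_of_inner_basis_eq e fun i => ?_
      rw [inner_sliceR_vecFunctional, mul_apply_eq_comp, mul_apply_eq_comp, ← star_apply_inner,
        hbasis, smul_apply, one_apply_eq_self, inner_smul_right, mul_comm]
  rw [star_apply_inner, ← mul_apply_eq_comp, ← mul_apply_eq_comp,
    ← inner_sliceR_vecFunctional, hslice, smul_apply, one_apply_eq_self, inner_smul_right,
    mul_comm]

theorem inner_star_W_tmul_apply_traceVector {a y : B H} (ha : a ∈ Q.Mhat) (hy : y ∈ Q.Mhat)
    (c d : H) :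
    ⟪Q.tensorOp 1 a (star Q.W (Q.tmul d Q.traceVector)), Q.tmul c (y Q.traceVector)⟫ =
      ⟪Q.tmul d (a Q.traceVector), Q.tensorOp 1 y (Q.W (Q.tmul c Q.traceVector))⟫ := by
  have hW := Q.sliceL_W_mem c d
  have hay : star a * y ∈ Q.Mhat := mul_mem (star_mem ha) hy
  calc _ = ⟪Q.traceVector, Q.sliceL (vecFunctional H c d) Q.W ((star a * y) Q.traceVector)⟫ := by
        rw [inner_sliceL_vecFunctional, ← inner_star_apply, star_tensorOp, star_one,
          Q.tensorOp_apply, star_apply_inner]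
        rfl
    _ = Q.phihat (star a * (y * Q.sliceL (vecFunctional H c d) Q.W)) := by
        rw [← mul_apply_eq_comp, ← Q.phihat_eq_inner (mul_mem hW hay),
          Q.phihat_tracial _ hW _ hay, mul_assoc]
    _ = _ := by
        rw [← Q.inner_apply_traceVector ha (mul_mem hy hW), ← sliceL_tensorOp_mul,
          inner_sliceL_vecFunctional, mul_apply_eq_comp]

/-- `d ⊗ aξ ↦ (1 ⊗ a)W*(d ⊗ ξ)` is isometric, and its adjoint maps `c ⊗ yξ` to
`(1 ⊗ y)W(c ⊗ ξ)`. -/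
theorem norm_tensorOp_W_tmul_traceVector_le {y : B H} (hy : y ∈ Q.Mhat) (c : H) :
    ‖Q.tensorOp 1 y (Q.W (Q.tmul c Q.traceVector))‖ ≤ ‖c‖ * ‖y Q.traceVector‖ := by
  classical
  obtain ⟨s, e, -⟩ := exists_hilbertBasis ℂ H
  set u := Q.tensorOp 1 y (Q.W (Q.tmul c Q.traceVector))
  let a (k : s) : B H := y * Q.sliceL (vecFunctional H c (e k)) Q.W
  have ha k : a k ∈ Q.Mhat := mul_mem hy (Q.sliceL_W_mem _ _)
  have hcoord k : adjoint (Q.ketL (e k)) u = a k Q.traceVector := by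
    change _ = (y * Q.sliceL (vecFunctional H c (e k)) Q.W) Q.traceVector
    rw [← sliceL_tensorOp_mul, ← adjoint_ketL_apply, mul_apply_eq_comp]
  let T (k : s) : H2 := Q.tensorOp 1 (a k) (star Q.W (Q.tmul (e k) Q.traceVector))
  have hT k l : ⟪T k, T l⟫ = ⟪e k, e l⟫ * ⟪a k Q.traceVector, a l Q.traceVector⟫ := by
    rw [inner_apply_apply, star_tensorOp, tensorOp_mul, star_one, one_mul,
      Q.inner_star_W_tmul_traceVector (mul_mem (star_mem (ha k)) (ha l)),
      Q.inner_apply_traceVector (ha k) (ha l)]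
  have he := orthonormal_iff_ite.1 e.orthonormal
  have hTT k : ⟪T k, T k⟫ = ⟪a k Q.traceVector, a k Q.traceVector⟫ := by
    rw [hT, he, if_pos rfl, one_mul]
  have hTv k : ⟪T k, Q.tmul c (y Q.traceVector)⟫ = ⟪T k, T k⟫ := by
    rw [Q.inner_star_W_tmul_apply_traceVector (ha k) hy, ← ketL_apply,
      ← adjoint_inner_right, hcoord, hTT]
  have hnorm : HasSum (fun k => ‖T k‖ ^ 2) (‖u‖ ^ 2) := by
    have h := Q.hasSum_inner_adjoint_ketL e u u
    simp only [hcoord, ← hTT, inner_self_eq_ofReal_norm_sq] at h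
    exact_mod_cast h
  have hle : ‖u‖ ^ 2 ≤ ‖Q.tmul c (y Q.traceVector)‖ ^ 2 :=
    hasSum_le_of_sum_le hnorm <| sum_norm_sq_le_of_inner_eq
      (fun k l hkl => show ⟪T k, T l⟫ = 0 by rw [hT, he, if_neg hkl, zero_mul]) hTv
  rw [norm_tmul] at hle
  exact le_of_sq_le_sq hle (by positivity)

theorem inner_W_tmul_traceVector {z : B H} (hz : z ∈ Q.Mhat) (c : H) :
    ⟪Q.W (Q.tmul c Q.traceVector), Q.tensorOp 1 z (Q.W (Q.tmul c Q.traceVector))⟫ =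
      ⟪c, c⟫ * Q.phihat z := by
  set u := Q.W (Q.tmul c Q.traceVector)
  let f : Q.Mhat.toStarSubalgebra →ₗ[ℂ] ℂ :=
    (⟪c, c⟫ • Q.phihat - vecFunctional H2 u u ∘ₗ Q.tensorOp 1) ∘ₗ
      Q.Mhat.toStarSubalgebra.subtype.toLinearMap
  have hf (a : Q.Mhat.toStarSubalgebra) : f a = ⟪c, c⟫ * Q.phihat a - ⟪u, Q.tensorOp 1 a u⟫ := rfl
  have hpos (a : Q.Mhat.toStarSubalgebra) : 0 ≤ f (star a * a) := by
    have hinner : ⟪u, Q.tensorOp 1 (star (a : B H) * a) u⟫ =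
        ⟪Q.tensorOp 1 (a : B H) u, Q.tensorOp 1 (a : B H) u⟫ := by
      rw [inner_apply_apply (Q.tensorOp 1 (a : B H)), star_tensorOp, tensorOp_mul, star_one,
        one_mul]
    have hle := pow_le_pow_left₀ (norm_nonneg _)
      (Q.norm_tensorOp_W_tmul_traceVector_le a.2 c) 2
    rw [hf]
    change 0 ≤ _ * Q.phihat (star (a : B H) * a) - ⟪u, Q.tensorOp 1 (star (a : B H) * a) u⟫
    rw [hinner, ← Q.inner_apply_traceVector a.2 a.2]
    simp only [inner_self_eq_ofReal_norm_sq, sub_nonneg]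
    rw [mul_pow] at hle
    exact_mod_cast hle
  have hone : f 1 = 0 := by
    rw [hf, OneMemClass.coe_one, Q.phihat_state.1, tensorOp_one_one, one_apply_eq_self,
      inner_apply_apply, Q.W_unitary_l, one_apply_eq_self, Q.tmul_inner,
      inner_self_eq_ofReal_norm_sq Q.traceVector, norm_traceVector]
    simp
  have hzero := norm_map_star_mul_sq_le hpos 1 ⟨z, hz⟩
  rw [star_one, one_mul, one_mul, hone, Complex.zero_re, zero_mul, sq_nonpos_iff,
    norm_eq_zero, hf, sub_eq_zero] at hzero
  exact hzero.symm

end DiscreteKacQG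

namespace LCQG

variable (Q : LCQG H H2)

/-- The sesquilinear map `(d, c) ↦ (ω_{c,d} ⊗ id)(X)`. -/
def sliceForm (X : B H2) : H →ₗ⋆[ℂ] H →ₗ[ℂ] B H :=
  LinearMap.mk₂'ₛₗ (starRingEnd ℂ) (RingHom.id ℂ)
    (fun d c => Q.sliceL (vecFunctional H c d) X)
    (fun d d' c => ext_inner_apply fun p q => by
      simp only [inner_sliceL_vecFunctional, add_apply, inner_add_right, map_add, inner_add_left,
        LinearMap.add_apply])
    (fun t d c => ext_inner_apply fun p q => by
      simp only [inner_sliceL_vecFunctional, smul_apply, inner_smul_right, map_smul,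
        inner_smul_left, LinearMap.smul_apply])
    (fun d c c' => ext_inner_apply fun p q => by
      simp only [inner_sliceL_vecFunctional, add_apply, inner_add_right, map_add,
        LinearMap.add_apply])
    (fun t d c => ext_inner_apply fun p q => by
      simp only [inner_sliceL_vecFunctional, smul_apply, inner_smul_right, map_smul,
        LinearMap.smul_apply, RingHom.id_apply])

theorem sliceL_one (c d : H) : Q.sliceL (vecFunctional H c d) 1 = ⟪d, c⟫ • (1 : B H) :=
  ext_inner_apply fun p q => by
    rw [inner_sliceL_vecFunctional, one_apply_eq_self, Q.tmul_inner, smul_apply,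
      inner_smul_right, one_apply_eq_self]

theorem hasSum_inner_sliceL_Delta {ι : Type*} (e : HilbertBasis ι ℂ H) (c d p q : H) (x : B H) :
    HasSum (fun k => ⟪Q.sliceL (vecFunctional H d (e k)) Q.W p,
        x (Q.sliceL (vecFunctional H c (e k)) Q.W q)⟫)
      ⟪p, Q.sliceL (vecFunctional H c d) (Q.Delta x) q⟫ := by
  have h := Q.hasSum_inner_adjoint_ketL e (Q.W (Q.tmul d p))
    ((Q.tensorOp 1 x * Q.W) (Q.tmul c q))
  simp only [adjoint_ketL_apply, sliceL_tensorOp_mul] at h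
  simpa only [inner_sliceL_vecFunctional, Delta, mul_assoc, mul_apply_eq_comp,
    inner_star_apply] using h

theorem isPositive_sliceL_Delta_sub_sum {ι : Type*} (e : HilbertBasis ι ℂ H) (c : H) {x : B H}
    (hx : x.IsPositive) (S : Finset ι) :
    (Q.sliceL (vecFunctional H c c) (Q.Delta x) -
      ∑ k ∈ S, star (Q.sliceL (vecFunctional H c (e k)) Q.W) * x *
        Q.sliceL (vecFunctional H c (e k)) Q.W).IsPositive :=
  isPositive_of_inner_nonneg fun v => by
    have hle := sum_le_hasSum S (fun k _ => hx.inner_nonneg_right _)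
      (Q.hasSum_inner_sliceL_Delta e c c v v x)
    simpa only [sub_apply, sum_apply, inner_sub_right, inner_sum, mul_apply_eq_comp,
      inner_star_apply, sub_nonneg] using hle

end LCQG

namespace DiscreteKacQG

open LCQG

variable (Q : DiscreteKacQG H H2) {E : B H →ₗ[ℂ] B H}

theorem phihat_map_nonneg (hE : IsConditionalExpectation H Q.Mhat E) {x : B H}
    (hx : x.IsPositive) : 0 ≤ Q.phihat (E x) :=
  Q.phihat_state.2 _ (hE.mem_range x) (hE.positive x hx)

theorem phihat_map_star_mul_mul (hE : IsConditionalExpectation H Q.Mhat E) {a : B H}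
    (ha : a ∈ Q.Mhat) (x : B H) :
    Q.phihat (E (star a * x * a)) = ⟪a Q.traceVector, E x (a Q.traceVector)⟫ := by
  rw [Q.phihat_eq_inner (hE.mem_range _)]
  refine hE.inner_map_star_mul_mul (fun b hb c hc => ?_) ha x
  rw [← Q.phihat_eq_inner (mul_mem hb hc), ← Q.phihat_eq_inner (mul_mem hc hb),
    Q.phihat_tracial b hb c hc]

theorem hasSum_phihat_map_sliceL_W_conj (hE : IsConditionalExpectation H Q.Mhat E) {ι : Type*}
    (e : HilbertBasis ι ℂ H) (c : H) (x : B H) :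
    HasSum (fun k => Q.phihat (E (star (Q.sliceL (vecFunctional H c (e k)) Q.W) * x *
      Q.sliceL (vecFunctional H c (e k)) Q.W))) (⟪c, c⟫ * Q.phihat (E x)) := by
  have h := Q.hasSum_inner_sliceL_Delta e c c Q.traceVector Q.traceVector (E x)
  rw [inner_sliceL_vecFunctional, Delta, mul_assoc, mul_apply_eq_comp, mul_apply_eq_comp,
    inner_star_apply, Q.inner_W_tmul_traceVector (hE.mem_range x)] at h
  simpa only [Q.phihat_map_star_mul_mul hE (Q.sliceL_W_mem _ _)] using h

theorem phihat_map_sliceL_Delta_self (hE : IsConditionalExpectation H Q.Mhat E) (c : H)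
    (x : B H) :
    Q.phihat (E (Q.sliceL (vecFunctional H c c) (Q.Delta x))) = ⟪c, c⟫ * Q.phihat (E x) := by
  obtain ⟨s, e, -⟩ := exists_hilbertBasis ℂ H
  let w (k : s) : B H := Q.sliceL (vecFunctional H c (e k)) Q.W
  let f : B H →ₗ[ℂ] ℂ := Q.phihat ∘ₗ E ∘ₗ Q.sliceL (vecFunctional H c c) ∘ₗ
    LinearMap.mulLeftRight ℂ (star Q.W, Q.W) ∘ₗ Q.tensorOp 1
  let g (k : s) : B H →ₗ[ℂ] ℂ := Q.phihat ∘ₗ E ∘ₗ LinearMap.mulLeftRight ℂ (star (w k), w k)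
  have hf (y : B H) : f y = Q.phihat (E (Q.sliceL (vecFunctional H c c) (Q.Delta y))) := rfl
  have hg (k : s) (y : B H) : g k y = Q.phihat (E (star (w k) * y * w k)) := rfl
  have hg_nonneg (k : s) (a : B H) : 0 ≤ g k (star a * a) := by
    rw [hg, show star (w k) * (star a * a) * w k = star (a * w k) * (a * w k) by
      simp only [star_mul, mul_assoc]]
    exact Q.phihat_map_nonneg hE (isPositive_star_mul_self _)
  have hgf (S : Finset s) (a : B H) : ∑ k ∈ S, g k (star a * a) ≤ f (star a * a) := by
    rw [← sub_nonneg]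
    simpa only [hf, hg, map_sub, map_sum] using Q.phihat_map_nonneg hE
      (Q.isPositive_sliceL_Delta_sub_sum e c (isPositive_star_mul_self a) S)
  have hsum (y : B H) : HasSum (fun k => g k y) (⟪c, c⟫ * Q.phihat (E y)) :=
    Q.hasSum_phihat_map_sliceL_W_conj hE e c y
  have hone : f 1 = ⟪c, c⟫ * Q.phihat (E 1) := by
    rw [hf, Delta, tensorOp_one_one, mul_one, Q.W_unitary_l, sliceL_one, map_smul, map_smul,
      smul_eq_mul]
  exact (hasSum_of_hasSum_one hg_nonneg hgf (hone ▸ hsum 1) x).unique (hsum x)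

theorem phihat_map_sliceL_Delta (hE : IsConditionalExpectation H Q.Mhat E) (c d : H) (x : B H) :
    Q.phihat (E (Q.sliceL (vecFunctional H c d) (Q.Delta x))) = ⟪d, c⟫ * Q.phihat (E x) := by
  have h : (Q.sliceForm (Q.Delta x)).compr₂ₛₗ (Q.phihat ∘ₗ E) = Q.phihat (E x) • innerₛₗ ℂ :=
    sesquilin_ext_self fun v => (Q.phihat_map_sliceL_Delta_self hE v x).trans (mul_comm _ _)
  exact (LinearMap.congr_fun₂ h d c).trans (mul_comm _ _)

theorem inner_Lam_eq_phihat_mul_star {a b : B H} (ha : a ∈ Q.Mhat) (hb : b ∈ Q.Mhat) :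
    ⟪Q.Lam b, Q.Lam a⟫ = Q.phihat (a * star b) := by
  rw [Q.Lam_inner b hb a ha, Q.phihat_tracial _ (star_mem hb) a ha]

end DiscreteKacQG

theorem mean_invariance_computation_general (Q : DiscreteKacQG H H2)
    (E : B H →ₗ[ℂ] B H) (hE : IsConditionalExpectation H Q.Mhat E) (x : B H)
    (ahat : B H) (ha : ahat ∈ Q.Mhat) (bhat : B H) (hb : bhat ∈ Q.Mhat) :
    (Q.phihat ∘ₗ E)
        (Q.toLCQG.sliceL (vecFunctional H (Q.Lam ahat) (Q.Lam bhat)) (Q.toLCQG.Delta x)) =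
      Q.toLCQG.funcTensor Q.phihat Q.phihat
        (Q.toLCQG.Deltahat (star bhat) * Q.tensorOp (E x) 1 * Q.toLCQG.Deltahat ahat)
    ∧ Q.toLCQG.funcTensor Q.phihat Q.phihat
        (Q.toLCQG.Deltahat (star bhat) * Q.tensorOp (E x) 1 * Q.toLCQG.Deltahat ahat) =
      Q.phihat (E x) * Q.phihat (ahat * star bhat)
    ∧ Q.phihat (E x) * Q.phihat (ahat * star bhat) =
      vecFunctional H (Q.Lam ahat) (Q.Lam bhat) 1 * (Q.phihat ∘ₗ E) x := by
  have hinner := Q.inner_Lam_eq_phihat_mul_star ha hb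
  have hdual := Q.funcTensor_phihat_Deltahat ha (star_mem hb) (hE.mem_range x)
  have hmean := Q.phihat_map_sliceL_Delta hE (Q.Lam ahat) (Q.Lam bhat) x
  rw [hinner, mul_comm] at hmean
  refine ⟨hmean.trans hdual.symm, hdual, ?_⟩
  rw [← hinner, mul_comm]
  rfl

end

/-- Let `𝔾` be a discrete quantum group of Kac type with tracial dual Haar state `φ̂`, let
`E` be a conditional expectation of `B(L²(𝔾))` onto `L∞(𝔾̂)`, and set
`m := φ̂ ∘ E|_{L∞(𝔾)}`.  For `x ∈ L∞(𝔾)`, `â, b̂ ∈ L∞(𝔾̂)` and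
`ω := ω_{Λ_{φ̂}(â), Λ_{φ̂}(b̂)}` one has
`m((ω ⊗ id)Δ(x)) = (φ̂ ⊗ φ̂)(Δ̂(b̂*)(E(x) ⊗ 1)Δ̂(â)) = φ̂(E(x)) φ̂(â b̂*) = ω(1) m(x)`. -/
theorem mean_invariance_computation (Q : DiscreteKacQG H H2)
    (E : B H →ₗ[ℂ] B H) (hE : IsConditionalExpectation H Q.Mhat E)
    (x : B H) (hx : x ∈ Q.M)
    (ahat : B H) (ha : ahat ∈ Q.Mhat) (bhat : B H) (hb : bhat ∈ Q.Mhat) :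
    (Q.phihat ∘ₗ E)
        (Q.toLCQG.sliceL (vecFunctional H (Q.Lam ahat) (Q.Lam bhat)) (Q.toLCQG.Delta x)) =
      Q.toLCQG.funcTensor Q.phihat Q.phihat
        (Q.toLCQG.Deltahat (star bhat) * Q.tensorOp (E x) 1 * Q.toLCQG.Deltahat ahat)
    ∧ Q.toLCQG.funcTensor Q.phihat Q.phihat
        (Q.toLCQG.Deltahat (star bhat) * Q.tensorOp (E x) 1 * Q.toLCQG.Deltahat ahat) =
      Q.phihat (E x) * Q.phihat (ahat * star bhat)
    ∧ Q.phihat (E x) * Q.phihat (ahat * star bhat) =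
      vecFunctional H (Q.Lam ahat) (Q.Lam bhat) 1 * (Q.phihat ∘ₗ E) x :=
  mean_invariance_computation_general Q E hE x ahat ha bhat hb

end LCQGNote
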